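/- Fix a triangulation T of an (n+3)-gon and let a, b be any pair of vertices of the polygon. Let θ̃_i = wt(σ_i) = √(x_j/(x_k x_l))·θ_i be the weight of the σ-edge of the i-th triangle. Then: (a) λ_{a,b} belongs to ℝ[x_1^{±1}, …, x_{2n+3}^{±1} | θ̃_1, …, θ̃_{n+1}]; i.e., every term of λ_{a,b} is a product of a Laurent monomial in the x_i and a monomial in the θ̃_i. (b) λ_{a,b} belongs to ℝ[x_1^{±1/2}, …, x_{2n+3}^{±1/2} | θ_1, …, θ_{n+1}]; i.e., every term of λ_{a,b} is a product of a Laurent monomial in the square roots of the x_i and a monomial in the θ_i. -/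

import Mathlib

namespace SuperTeich

open Sum

/-!  Decorated super-Teichmüller theory of a marked disk (polygon), after
Penner–Zeitlin, following Musiker–Ovenhouse–Zhang.

The polygon has `N` vertices `0, 1, …, N-1` (type `Fin N`) in counterclockwise
convex position.  Edges/arcs are unordered pairs `Sym2 (Fin N)`; for an oriented
diagonal `u → v` with `u < v`, its left side consists of the vertices strictly
between `u` and `v`.  A state consists of a triangulation (its set of internal
diagonals), an orientation of the edges (`true` on `s(u,v)`, `u < v`, means
`u → v`), a `λ`-length for each edge and a `μ`-invariant for each triangle.
`Flip` is the super Ptolemy transformation of states.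

The odd quantities live in an ambient `ℚ`-algebra `A` together with a positive
cone `Pos` of central invertible even elements and a coherent multiplicative
choice of square roots `sqrt` on it (encoding the distinguished square roots
with positive body). -/

/-- Arcs/edges of the `N`-gon: unordered pairs of vertices. -/
abbrev Edg (N : ℕ) := Sym2 (Fin N)

/-- Boundary edges of the polygon: pairs of cyclically consecutive vertices. -/
def isBnd {N : ℕ} [NeZero N] (e : Edg N) : Prop := ∃ i : Fin N, e = s(i, i + 1)

/-- Two arcs of the convex polygon cross (in their interiors). -/
def crossE {N : ℕ} (e f : Edg N) : Prop :=
  ∃ p q r t : Fin N, p < q ∧ q < r ∧ r < t ∧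
    ((e = s(p, r) ∧ f = s(q, t)) ∨ (f = s(p, r) ∧ e = s(q, t)))

/-- `e` is an edge of the triangulation with set of internal diagonals `D`. -/
def isEdgeOf {N : ℕ} [NeZero N] (D : Finset (Edg N)) (e : Edg N) : Prop :=
  isBnd e ∨ e ∈ D

/-- `D` is the set of internal diagonals of a triangulation of the `N`-gon:
`N - 3` pairwise noncrossing diagonals. -/
def IsTriangulation {N : ℕ} [NeZero N] (D : Finset (Edg N)) : Prop :=
  D.card + 3 = N ∧ (∀ e ∈ D, ¬ isBnd e ∧ ¬ e.IsDiag) ∧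
    ∀ e ∈ D, ∀ f ∈ D, ¬ crossE e f

/-- `t` is (the vertex set of) a triangle of the triangulation `D`. -/
def IsTri {N : ℕ} [NeZero N] (D : Finset (Edg N)) (t : Finset (Fin N)) : Prop :=
  t.card = 3 ∧ ∀ u ∈ t, ∀ v ∈ t, u ≠ v → isEdgeOf D s(u, v)

/-- A state of the polygon: a triangulation with a spin structure representative
(an orientation of the edges) and the associated `λ`-lengths (even, attached to
edges) and `μ`-invariants (odd, attached to triangles). -/
structure PState (A : Type*) (N : ℕ) where
  diag : Finset (Edg N)
  ori : Edg N → Bool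
  lam : Edg N → A
  mu : Finset (Fin N) → A

/-- The super Ptolemy transformation (flip) of states.  The flipped diagonal is
`s(p,r)`; the apexes of its two adjacent triangles are `j` (between `p` and `r`)
and `l` (outside).  With respect to the orientation of `s(p,r)`, `θ` is the
`μ`-invariant of the triangle on its left and `σ` of the triangle on its right,
and the quadrilateral's sides are `aa, bb, cc, dd` in counterclockwise order
starting at the tail of the oriented diagonal.  The relations imposed are
`e·f = ac + bd + √(abcd)·σθ`, `θ'·√(ac+bd) = θ√(bd) + σ√(ac)`,
`σ'·√(ac+bd) = σ√(bd) − θ√(ac)`, where `θ'` (resp. `σ'`) is the triangle on the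
left (resp. right) of the new oriented diagonal, which goes from the `σ`-side
apex to the `θ`-side apex; the side `bb` (joining the `θ`-apex to the head of
the old diagonal) has its orientation reversed, and all other data are
unchanged. -/
def Flip {A : Type*} [Ring A] {N : ℕ} [NeZero N] (Pos : Set A) (sqrt : A → A)
    (st st' : PState A N) : Prop :=
  ∃ p j r l : Fin N, p < j ∧ j < r ∧ (l < p ∨ r < l) ∧
    s(p, r) ∈ st.diag ∧
    IsTri st.diag {p, j, r} ∧ IsTri st.diag {p, r, l} ∧
    st'.diag = insert s(j, l) (st.diag.erase s(p, r)) ∧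
    (let ori := st.ori s(p, r)
     let θ := if ori then st.mu {p, j, r} else st.mu {p, r, l}
     let σ := if ori then st.mu {p, r, l} else st.mu {p, j, r}
     let θT : Finset (Fin N) := if ori then {p, j, l} else {j, r, l}
     let σT : Finset (Fin N) := if ori then {j, r, l} else {p, j, l}
     let aa := if ori then st.lam s(p, j) else st.lam s(r, l)
     let bb := if ori then st.lam s(j, r) else st.lam s(l, p)
     let cc := if ori then st.lam s(r, l) else st.lam s(p, j)
     let dd := if ori then st.lam s(l, p) else st.lam s(j, r)
     let bEdge : Edg N := if ori then s(j, r) else s(l, p)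
     st.lam s(p, r) * st'.lam s(j, l)
         = aa * cc + bb * dd + sqrt (aa * bb * cc * dd) * (σ * θ) ∧
     st'.lam s(j, l) ∈ Pos ∧
     st'.mu θT * sqrt (aa * cc + bb * dd) = θ * sqrt (bb * dd) + σ * sqrt (aa * cc) ∧
     st'.mu σT * sqrt (aa * cc + bb * dd) = σ * sqrt (bb * dd) - θ * sqrt (aa * cc) ∧
     (∀ e : Edg N, e ≠ s(j, l) → st'.lam e = st.lam e) ∧
     (∀ t : Finset (Fin N), t ≠ θT → t ≠ σT → st'.mu t = st.mu t) ∧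
     (∀ e : Edg N, e ≠ s(j, l) → e ≠ bEdge → st'.ori e = st.ori e) ∧
     st'.ori bEdge = ! st.ori bEdge ∧
     st'.ori s(j, l) = (if ori then decide (l < j) else decide (j < l)))

universe u

/-- A commutative even part and an odd part inside a ring, with their supercommutative
multiplication. -/
structure EvenOdd (A : Type u) [Ring A] where
  E : Type u
  O : Type u
  [commRing : CommRing E]
  [addCommGroup : AddCommGroup O]
  [module : Module E O]
  β : O →ₗ[E] O →ₗ[E] E
  alt : ∀ x, β x x = 0
  cyc : ∀ x y z, β x y • z = β y z • x
  even : E →+* A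
  odd : O →+ A
  even_inj : Function.Injective even
  odd_inj : Function.Injective odd
  odd_smul : ∀ e x, odd (e • x) = even e * odd x
  even_comm : ∀ e x, even e * odd x = odd x * even e
  odd_mul : ∀ x y, odd x * odd y = even (β x y)

attribute [instance] EvenOdd.commRing EvenOdd.addCommGroup EvenOdd.module

/-- Central elements and pairwise anticommuting elements lie in a common even and odd part. -/
theorem exists_evenOdd {A : Type*} [Ring A] [Algebra ℚ A] (s : Set A)
    (anti : ∀ x ∈ s, ∀ y ∈ s, x * y = -(y * x)) :
    ∃ P : EvenOdd A, (∀ z : A, (∀ x, z * x = x * z) → ∃ e, P.even e = z) ∧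
      ∀ x ∈ s, ∃ o, P.odd o = x := by
  let g : Set A := {z | ∀ x, z * x = x * z} ∪ {z | ∃ x ∈ s, ∃ y ∈ s, z = x * y}
  have gs : ∀ z ∈ g, ∀ x ∈ s, z * x = x * z := by
    rintro z (hz | ⟨u, hu, v, hv, rfl⟩) x hx
    · exact hz x
    · rw [mul_assoc, anti v hv x hx, mul_neg, ← mul_assoc, anti u hu x hx, neg_mul, neg_neg,
        mul_assoc]
  have gg : ∀ z ∈ g, ∀ w ∈ g, z * w = w * z := by
    rintro z hz w (hw | ⟨u, hu, v, hv, rfl⟩)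
    · exact (hw z).symm
    · rw [← mul_assoc, gs z hz u hu, mul_assoc, gs z hz v hv, mul_assoc]
  have := Subring.isMulCommutative_closure gg
  let : CommRing (Subring.closure g) :=
    { Subring.toRing (Subring.closure g) with mul_comm := this.is_comm.comm }
  have es : ∀ z ∈ Subring.closure g, ∀ x ∈ s, z * x = x * z := by
    intro z hz x hx
    induction hz using Subring.closure_induction with
    | mem z hz => exact gs z hz x hx
    | zero => simp
    | one => simp
    | add a b _ _ ha hb => rw [add_mul, mul_add, ha, hb]
    | neg a _ ha => rw [neg_mul, mul_neg, ha]
    | mul a b _ _ ha hb => rw [mul_assoc, hb, ← mul_assoc, ha, mul_assoc]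
  let modA : Module (Subring.closure g) A := Module.compHom A (Subring.closure g).subtype
  have smul_def : ∀ (e : Subring.closure g) (x : A), e • x = e.1 * x := fun _ _ => rfl
  let M : Submodule (Subring.closure g) A := Submodule.span _ s
  have eM : ∀ (e : Subring.closure g), ∀ x ∈ M, e.1 * x = x * e.1 := by
    intro e x hx
    induction hx using Submodule.span_induction with
    | mem x hx => exact es _ e.2 x hx
    | zero => simp
    | add a b _ _ ha hb => rw [add_mul, mul_add, ha, hb]
    | smul c a _ ha =>
      have hc : e.1 * c.1 = c.1 * e.1 := congrArg Subtype.val (mul_comm e c)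
      rw [smul_def, ← mul_assoc, hc, mul_assoc, ha, mul_assoc]
  have mm : ∀ x ∈ M, ∀ y ∈ M, x * y ∈ Subring.closure g := by
    intro x hx y hy
    induction hx, hy using Submodule.span_induction₂ with
    | mem_mem x y hx hy => exact Subring.subset_closure (Or.inr ⟨x, hx, y, hy, rfl⟩)
    | zero_left y hy => simp
    | zero_right x hx => simp
    | add_left x y z _ _ _ h h' => rw [add_mul]; exact add_mem h h'
    | add_right x y z _ _ _ h h' => rw [mul_add]; exact add_mem h h'
    | smul_left r x y _ _ h => rw [smul_def, mul_assoc]; exact mul_mem r.2 h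
    | smul_right r x y hx _ h =>
      rw [smul_def, ← mul_assoc, ← eM r x hx, mul_assoc]; exact mul_mem r.2 h
  have ma : ∀ x ∈ M, ∀ y ∈ M, x * y = -(y * x) := by
    intro x hx y hy
    induction hx, hy using Submodule.span_induction₂ with
    | mem_mem x y hx hy => exact anti x hx y hy
    | zero_left y hy => simp
    | zero_right x hx => simp
    | add_left x y z _ _ _ h h' => rw [add_mul, mul_add, h, h', neg_add]
    | add_right x y z _ _ _ h h' => rw [add_mul, mul_add, h, h', neg_add]
    | smul_left r x y hx hy h =>
      rw [smul_def, mul_assoc, h, ← mul_assoc, ← eM r y hy, mul_assoc, mul_neg]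
    | smul_right r x y hx _ h =>
      rw [smul_def, ← mul_assoc, ← eM r x hx, mul_assoc, h, mul_neg, mul_assoc]
  let β : M →ₗ[Subring.closure g] M →ₗ[Subring.closure g] (Subring.closure g) :=
    LinearMap.mk₂ _ (fun x y => ⟨x.1 * y.1, mm _ x.2 _ y.2⟩)
      (fun x y z => Subtype.ext (add_mul _ _ _))
      (fun c x y => Subtype.ext (mul_assoc _ _ _))
      (fun x y z => Subtype.ext (mul_add _ _ _))
      (fun c x y => Subtype.ext (by
        change x.1 * (c.1 * y.1) = c.1 * (x.1 * y.1)
        rw [← mul_assoc, ← eM c x.1 x.2, mul_assoc]))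
  have hβ : ∀ x y : M, (β x y).1 = x.1 * y.1 := fun _ _ => rfl
  refine ⟨{ E := Subring.closure g, O := M, β := β, alt := ?_, cyc := ?_,
            even := (Subring.closure g).subtype, odd := M.subtype.toAddMonoidHom,
            even_inj := Subtype.val_injective, odd_inj := Subtype.val_injective,
            odd_smul := fun _ _ => rfl, even_comm := fun e x => eM e x.1 x.2,
            odd_mul := fun _ _ => rfl }, ?_, ?_⟩
  · intro x
    refine Subtype.ext ?_
    have h := ma x.1 x.2 x.1 x.2
    have h2 : (2 : ℚ) • (x.1 * x.1) = 0 := by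
      rw [two_smul]; nth_rw 1 [h]; simp
    exact (smul_eq_zero.1 h2).resolve_left two_ne_zero
  · intro x y z
    refine Subtype.ext ?_
    change x.1 * y.1 * z.1 = y.1 * z.1 * x.1
    rw [mul_assoc, eM ⟨_, mm _ y.2 _ z.2⟩ x.1 x.2]
  · exact fun z hz => ⟨⟨z, Subring.subset_closure (Or.inl hz)⟩, rfl⟩
  · exact fun x hx => ⟨⟨x, Submodule.subset_span hx⟩, rfl⟩

/-- Supervectors with two even coordinates and one odd coordinate. -/
structure SVec (E O : Type*) where
  x : E
  y : E
  z : O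

namespace SVec

variable {E O : Type*} [CommRing E] [AddCommGroup O] [Module E O] (β : O →ₗ[E] O →ₗ[E] E)

/-- The ortho-symplectic form on supervectors. -/
def br (u v : SVec E O) : E := u.x * v.y - u.y * v.x + β u.z v.z

/-- The odd invariant of three supervectors. -/
def odd3 (u v w : SVec E O) : O :=
  br β v w • u.z - br β u w • v.z + br β u v • w.z - β u.z v.z • w.z

/-- The opposite supervector. -/
def opp (u : SVec E O) : SVec E O := ⟨-u.x, -u.y, -u.z⟩

variable {β}

theorem swap_of_alt (alt : ∀ x, β x x = 0) (x y : O) : β x y = -β y x := by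
  have h := alt (x + y)
  simp only [map_add, LinearMap.add_apply, alt] at h
  linear_combination h

theorem br_swap (alt : ∀ x, β x x = 0) (u v : SVec E O) : br β u v = -br β v u := by
  simp only [br]
  rw [swap_of_alt alt u.z v.z]; ring

theorem br_self (alt : ∀ x, β x x = 0) (u : SVec E O) : br β u u = 0 := by
  simp only [br, alt]; ring

theorem br_opp_left (u v : SVec E O) : br β u.opp v = -br β u v := by
  simp only [br, opp, map_neg, LinearMap.neg_apply]; ring

theorem br_opp_right (u v : SVec E O) : br β u v.opp = -br β u v := by
  simp only [br, opp, map_neg]; ring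

theorem odd3_rot (alt : ∀ x, β x x = 0) (cyc : ∀ x y z, β x y • z = β y z • x)
    (u v w : SVec E O) : odd3 β v w u = odd3 β u v w := by
  simp only [odd3]
  rw [br_swap alt w u, br_swap alt v u, cyc u.z v.z w.z]
  module

theorem odd3_swap (alt : ∀ x, β x x = 0)
    (u v w : SVec E O) : odd3 β v u w = -odd3 β u v w := by
  simp only [odd3]
  rw [br_swap alt v u, swap_of_alt alt v.z u.z]
  module

theorem odd3_self (alt : ∀ x, β x x = 0) (u v : SVec E O) : odd3 β u u v = 0 := by
  simp only [odd3, br_self alt, alt]; module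

theorem odd3_opp_right (u v w : SVec E O) : odd3 β u v w.opp = -odd3 β u v w := by
  simp only [odd3, br_opp_right]
  simp only [opp]
  module

/-- The Ptolemy relation for four supervectors. -/
theorem ptolemy (alt : ∀ x, β x x = 0) (cyc : ∀ x y z, β x y • z = β y z • x)
    (p q a u : SVec E O) :
    br β p q * br β p q * br β a u =
      br β p q * (br β a q * br β p u - br β a p * br β q u)
        + β (odd3 β a p q) (odd3 β p q u) := by
  have c4 : ∀ x y z w, β x y * β z w = β y z * β x w := by
    intro x y z w
    have := congrArg (fun t => β t w) (cyc x y z)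
    simpa using this
  have c0 : ∀ x y w, β x y * β y w = 0 := by
    intro x y w
    rw [c4, alt, zero_mul]
  obtain ⟨a1, a2, a3⟩ := a
  obtain ⟨p1, p2, p3⟩ := p
  obtain ⟨q1, q2, q3⟩ := q
  obtain ⟨u1, u2, u3⟩ := u
  simp only [odd3, br, map_add, map_sub, LinearMap.add_apply, LinearMap.sub_apply, map_smul,
    LinearMap.smul_apply, smul_eq_mul, alt]
  rw [swap_of_alt alt q3 p3]
  have e1 : β a3 p3 * β q3 u3 = β p3 q3 * β a3 u3 := c4 _ _ _ _
  have e2 : β a3 q3 * β p3 u3 = - (β p3 q3 * β a3 u3) := by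
    rw [c4, swap_of_alt alt q3 p3]; ring
  have e3 : β p3 q3 * β p3 q3 = 0 := by
    have := c0 q3 p3 q3
    rw [swap_of_alt alt q3 p3] at this
    linear_combination - this
  have e4 := c0 a3 p3 q3
  have e5 := c0 p3 q3 u3
  have e6 : β p3 q3 * β a3 q3 = 0 := by
    have := c0 p3 q3 a3
    rw [swap_of_alt alt q3 a3] at this
    linear_combination - this
  have e7 : β p3 q3 * β p3 u3 = 0 := by
    have := c0 q3 p3 u3
    rw [swap_of_alt alt q3 p3] at this
    linear_combination - this
  have e8 : β p3 q3 * β a3 p3 = 0 := by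
    have := c0 a3 p3 q3
    linear_combination this
  clear c4 c0 cyc
  generalize β a3 p3 = A at *
  generalize β a3 q3 = B at *
  generalize β a3 u3 = C at *
  generalize β p3 q3 = D at *
  generalize β p3 u3 = F at *
  generalize β q3 u3 = G at *
  clear alt
  grind

theorem odd3_ptolemy_left (alt : ∀ x, β x x = 0) (cyc : ∀ x y z, β x y • z = β y z • x)
    (p q a u : SVec E O) :
    br β p q • odd3 β p a u = br β p u • odd3 β p a q + br β p a • odd3 β p q u := by
  have h (u v : SVec E O) : β u.z v.z • p.z = β p.z u.z • v.z := (cyc _ _ _).symm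
  have z (u : SVec E O) : β p.z u.z • p.z = 0 := by
    rw [swap_of_alt alt, neg_smul, cyc, alt, zero_smul, neg_zero]
  simp only [odd3]
  linear_combination (norm := (simp only [br]; module))
      br β p q • h a u - br β p u • h a q - br β p a • h q u
    + (a.x * u.y - a.y * u.x) • z q - (a.x * q.y - a.y * q.x) • z u
    - (q.x * u.y - q.y * u.x) • z a

/-- Two supervectors with invertible bracket extend to a triple with prescribed invariants. -/
theorem exists_apex (alt : ∀ x, β x x = 0) (cyc : ∀ x y z, β x y • z = β y z • x)
    (p q : SVec E O) (h : IsUnit (br β p q)) (a c : E) (w : O) :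
    ∃ k : SVec E O, br β p k = a ∧ br β k q = c ∧ odd3 β p k q = w := by
  obtain ⟨i, hi⟩ := h.exists_right_inv
  have hn : β p.z q.z * β p.z q.z = 0 := by
    have := congrArg (fun t => β t q.z) (cyc q.z p.z p.z)
    rw [swap_of_alt alt q.z p.z] at this
    simp only [map_smul, LinearMap.smul_apply, alt, smul_eq_mul, zero_mul] at this
    linear_combination - this
  have hd : ∃ j, (p.x * q.y - p.y * q.x) * j = 1 := by
    refine ⟨i * i * (br β p q + β p.z q.z), ?_⟩
    have h1 : p.x * q.y - p.y * q.x = br β p q - β p.z q.z := by simp only [br]; ring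
    rw [h1]
    linear_combination (br β p q * i + 1) * hi - i * i * hn
  obtain ⟨j, hj⟩ := hd
  set d := p.x * q.y - p.y * q.x with hd
  obtain ⟨η, hη⟩ : ∃ η : O, η = -(j * j) • w := ⟨_, rfl⟩
  have hpq : β q.z p.z = -β p.z q.z := swap_of_alt alt _ _
  have hk1 : br β p ⟨c * i * p.x + a * i * q.x + β η (q.x • p.z - p.x • q.z),
      c * i * p.y + a * i * q.y + β η (q.y • p.z - p.y • q.z),
      (c * i) • p.z + (a * i) • q.z + d • η⟩ = a := by
    have e2 : β p.z η = -β η p.z := swap_of_alt alt _ _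
    simp only [br] at hi ⊢
    simp only [map_add, map_sub, map_smul, smul_eq_mul, alt, e2]
    linear_combination a * hi + hd * (β η p.z)
  have hk2 : br β ⟨c * i * p.x + a * i * q.x + β η (q.x • p.z - p.x • q.z),
      c * i * p.y + a * i * q.y + β η (q.y • p.z - p.y • q.z),
      (c * i) • p.z + (a * i) • q.z + d • η⟩ q = c := by
    simp only [br] at hi ⊢
    simp only [map_add, map_sub, map_smul, LinearMap.add_apply, LinearMap.smul_apply,
      smul_eq_mul, alt]
    linear_combination c * hi
  refine ⟨_, hk1, hk2, ?_⟩
  rw [odd3, hk1, hk2]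
  simp only [map_add, map_smul, alt, smul_eq_mul]
  have z1 : β p.z q.z • q.z = 0 := by rw [cyc, alt, zero_smul]
  have z2 : β p.z η • q.z = -(β p.z q.z • η) := by
    rw [swap_of_alt alt, neg_smul, cyc]
  have z3 : (d * d) • η = -w := by
    rw [hη, smul_smul, show d * d * -(j * j) = -((d * j) * (d * j)) by ring, hj]
    module
  have z4 : d = br β p q - β p.z q.z := by rw [hd, br]; ring
  have z5 : (d * d) • η = (d * (br β p q - β p.z q.z)) • η := by rw [← z4]
  linear_combination (norm := skip) - (a * i) • z1 - d • z2 + z5 - z3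
    + (- hi) • (c • p.z) + (- hi) • (a • q.z)
  module

/-- A set of units of a commutative ring closed under sums and products, with chosen square
roots. -/
structure IsSqrtCone (Pos : Set E) (sq : E → E) : Prop where
  add : ∀ p ∈ Pos, ∀ q ∈ Pos, p + q ∈ Pos
  mul : ∀ p ∈ Pos, ∀ q ∈ Pos, p * q ∈ Pos
  unit : ∀ p ∈ Pos, IsUnit p
  sq_mem : ∀ p ∈ Pos, sq p ∈ Pos
  sq_sq : ∀ p ∈ Pos, sq p * sq p = p

namespace IsSqrtCone

variable {Pos : Set E} {sq : E → E}

theorem eq_of_sq (h : IsSqrtCone Pos sq) {s t : E} (hs : s ∈ Pos) (ht : t ∈ Pos)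
    (e : s * s = t * t) : s = t := by
  have := (h.unit _ (h.add s hs t ht)).mul_left_cancel (b := s - t) (c := 0)
    (by linear_combination e)
  linear_combination this

theorem sq_mul (h : IsSqrtCone Pos sq) {s t : E} (hs : s ∈ Pos) (ht : t ∈ Pos) :
    sq (s * t) = sq s * sq t := by
  refine h.eq_of_sq (h.sq_mem _ (h.mul s hs t ht)) (h.mul _ (h.sq_mem s hs) _ (h.sq_mem t ht)) ?_
  rw [h.sq_sq _ (h.mul s hs t ht)]
  linear_combination - t * h.sq_sq s hs - sq s * sq s * h.sq_sq t ht

/-- The square root of a nilpotent perturbation acts as the unperturbed square root on odd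
elements killed by the perturbation. -/
theorem sq_smul_eq (h : IsSqrtCone Pos sq) {s t : E} (hs : s ∈ Pos) (ht : t ∈ Pos) {w : O}
    (e : (s * s - t * t) • w = 0) : s • w = t • w := by
  have := (h.unit _ (h.add s hs t ht)).smul_left_cancel (x := (s - t) • w) (y := 0)
  rw [smul_zero, smul_smul, show (s + t) * (s - t) = s * s - t * t by ring] at this
  have := this.1 e
  rwa [sub_smul, sub_eq_zero] at this

end IsSqrtCone

variable (β) in
/-- The odd element `m` is, up to the sign `η`, the normalized invariant of `u, v, w`. -/
def IsMu (sq : E → E) (m : O) (u v w : SVec E O) (η : ℤ) : Prop :=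
  (sq (br β u v) * sq (br β v w) * sq (br β u w)) • m = η • odd3 β u v w

theorem IsMu.rot (alt : ∀ x, β x x = 0) (cyc : ∀ x y z, β x y • z = β y z • x) {sq : E → E}
    {m : O} {u v w : SVec E O} {η : ℤ} :
    IsMu β sq m v w u.opp (-η) ↔ IsMu β sq m u v w η := by
  simp only [IsMu, odd3_opp_right, odd3_rot alt cyc, br_opp_right]
  rw [← br_swap alt, ← br_swap alt, smul_neg, neg_smul, neg_neg]
  rw [show sq (br β v w) * sq (br β u w) * sq (br β u v) =
    sq (br β u v) * sq (br β v w) * sq (br β u w) by ring]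

/-- The super Ptolemy flip, for supervectors in convex position. -/
theorem flip_vectors (alt : ∀ x, β x x = 0) (cyc : ∀ x y z, β x y • z = β y z • x)
    {Pos : Set E} {sq : E → E} (hP : IsSqrtCone Pos sq) {t y h s : SVec E O} {f : E} {θ σ θ' σ' : O}
    {η : ℤ} (hη : η = 1 ∨ η = -1)
    (hty : br β t y ∈ Pos) (hyh : br β y h ∈ Pos) (hhs : br β h s ∈ Pos) (hts : br β t s ∈ Pos)
    (hth : br β t h ∈ Pos) (hf : f ∈ Pos)
    (hθ : IsMu β sq θ t y h η) (hσ : IsMu β sq σ t h s η)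
    (h1 : br β t h * f = br β t y * br β h s + br β y h * br β t s +
      sq (br β t y * br β y h * br β h s * br β t s) * β σ θ)
    (h2 : sq (br β t y * br β h s + br β y h * br β t s) • θ' =
      sq (br β y h * br β t s) • θ + sq (br β t y * br β h s) • σ)
    (h3 : sq (br β t y * br β h s + br β y h * br β t s) • σ' =
      sq (br β y h * br β t s) • σ - sq (br β t y * br β h s) • θ) :
    f = br β y s ∧ IsMu β sq θ' t y s η ∧ IsMu β sq σ' y h s η := by
  simp only [IsMu] at hθ hσ ⊢
  have hac := hP.mul _ hty _ hhs
  have hbd := hP.mul _ hyh _ hts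
  have hab := hP.mul _ hty _ hyh
  have habc := hP.mul _ hab _ hhs
  have hS := hP.sq_mem _ (hP.add _ hac _ hbd)
  have hSS := hP.sq_sq _ (hP.add _ hac _ hbd)
  rw [hP.sq_mul habc hts, hP.sq_mul hab hhs, hP.sq_mul hty hyh] at h1
  rw [hP.sq_mul hyh hts, hP.sq_mul hty hhs] at h2 h3
  generalize sq (br β t y * br β h s + br β y h * br β t s) = S at *
  have hA := hP.sq_sq _ hty
  have hB := hP.sq_sq _ hyh
  have hC := hP.sq_sq _ hhs
  have hD := hP.sq_sq _ hts
  have hE := hP.sq_sq _ hth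
  have hEm := hP.sq_mem _ hth
  have hηη : η * η = 1 := by rcases hη with rfl | rfl <;> rfl
  have hηE : (η : E) * (η : E) = 1 := by exact_mod_cast congrArg (Int.cast (R := E)) hηη
  have h1' : odd3 β t y h = (η : E) • (sq (br β t y) * sq (br β y h) * sq (br β t h)) • θ := by
    rw [hθ, Int.cast_smul_eq_zsmul, smul_smul, hηη, one_smul]
  have h2' : odd3 β t h s = (η : E) • (sq (br β t h) * sq (br β h s) * sq (br β t s)) • σ := by
    rw [hσ, Int.cast_smul_eq_zsmul, smul_smul, hηη, one_smul]
  have hβ : β θ σ = - β σ θ := swap_of_alt alt _ _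
  have hfe : f = br β y s := by
    have key := ptolemy alt cyc t h y s
    rw [odd3_swap alt t y h,
      br_swap alt y t, h1', h2'] at key
    simp only [map_neg, map_smul, LinearMap.neg_apply, LinearMap.smul_apply, smul_eq_mul, hβ]
      at key
    refine ((hP.unit _ hth).mul (hP.unit _ hth)).mul_left_cancel ?_
    linear_combination br β t h * h1 - key - (sq (br β t y) * sq (br β y h) * sq (br β h s) *
      sq (br β t s) * β σ θ * sq (br β t h) * sq (br β t h)) * hηE -
      (sq (br β t y) * sq (br β y h) * sq (br β h s) * sq (br β t s) * β σ θ) * hE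
  subst hfe
  have hF := hP.sq_sq _ hf
  have hFm := hP.sq_mem _ hf
  generalize sq (br β t y) = A at *
  generalize sq (br β y h) = B at *
  generalize sq (br β h s) = C at *
  generalize sq (br β t s) = D at *
  generalize sq (br β t h) = G at *
  generalize sq (br β y s) = F at *
  have hN : ∀ w : O, β σ θ • w = 0 → (F * G) • w = S • w := by
    intro w hw
    refine hP.sq_smul_eq (hP.mul _ hFm _ hEm) hS ?_
    have : F * G * (F * G) - S * S = (A * B * C * D) * β σ θ := by
      linear_combination h1 - hSS + (F * F) * hE + br β t h * hF
    rw [this, mul_smul, hw, smul_zero]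
  have nθ : β σ θ • θ = 0 := by rw [cyc, alt, zero_smul]
  have nσ : β σ θ • σ = 0 := by rw [← neg_neg (β σ θ), ← hβ, neg_smul, cyc, alt, zero_smul,
    neg_zero]
  have hSu := hP.unit _ hS
  have nθ' : β σ θ • θ' = 0 := by
    refine (hSu.smul_left_cancel).1 ?_
    rw [smul_comm, h2]
    linear_combination (norm := module) (B * D) • nθ + (A * C) • nσ
  have nσ' : β σ θ • σ' = 0 := by
    refine (hSu.smul_left_cancel).1 ?_
    rw [smul_comm, h3]
    linear_combination (norm := module) (B * D) • nσ - (A * C) • nθ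
  have gu := hP.unit _ hEm
  refine ⟨rfl, ?_, ?_⟩
  · refine (hP.unit _ hth).smul_left_cancel.1 ?_
    have key := odd3_ptolemy_left alt cyc t h y s
    rw [smul_comm _ η, key, h1', h2', ← Int.cast_smul_eq_zsmul E, ← hE, ← hA, ← hD]
    have := hN θ' nθ'
    linear_combination (norm := module) (G * A * D) • this + (G * A * D) • h2
      - hηE • ((D * D * A * B * G) • θ + (A * A * G * C * D) • σ)
  · refine (hP.unit _ hth).smul_left_cancel.1 ?_
    have key := odd3_ptolemy_left alt cyc h t y s
    have key' : br β t h • odd3 β y h s = - br β h s • odd3 β t y h + br β y h • odd3 β t h s := by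
      rw [br_swap alt h t, odd3_swap alt y h s, odd3_swap alt y h t, odd3_rot alt cyc t y h, 
        odd3_swap alt t h s, br_swap alt h y] at key
      linear_combination (norm := module) key
    rw [smul_comm _ η, key', h1', h2', ← Int.cast_smul_eq_zsmul E, ← hE, ← hB, ← hC]
    have := hN σ' nσ'
    linear_combination (norm := module) (G * B * C) • this + (G * B * C) • h3
      - hηE • ((B * B * G * C * D) • σ - (C * C * A * B * G) • θ)

end SVec

/-- The vertices `t, y, h, s` occur in this cyclic order. -/
def CycOrd {N : ℕ} (t y h s : Fin N) : Prop :=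
  (t < y ∧ y < h ∧ h < s) ∨ (y < h ∧ h < s ∧ s < t) ∨ (h < s ∧ s < t ∧ t < y) ∨
    (s < t ∧ t < y ∧ y < h)

/-- The super Ptolemy transformation at a quadrilateral with vertices `t, y, h, s` in cyclic order
whose diagonal is oriented from `t` to `h`. -/
structure FlipAt {A : Type*} [Ring A] {N : ℕ} [NeZero N] (Pos : Set A) (sqrt : A → A)
    (st st' : PState A N) (t y h s : Fin N) : Prop where
  cyc : CycOrd t y h s
  mem : s(t, h) ∈ st.diag
  tri₁ : IsTri st.diag {t, y, h}
  tri₂ : IsTri st.diag {t, h, s}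
  diag : st'.diag = insert s(y, s) (st.diag.erase s(t, h))
  ori : st.ori s(t, h) = decide (t < h)
  lam_new : st.lam s(t, h) * st'.lam s(y, s) =
    st.lam s(t, y) * st.lam s(h, s) + st.lam s(y, h) * st.lam s(t, s) +
      sqrt (st.lam s(t, y) * st.lam s(y, h) * st.lam s(h, s) * st.lam s(t, s)) *
        (st.mu {t, h, s} * st.mu {t, y, h})
  pos : st'.lam s(y, s) ∈ Pos
  mu₁ : st'.mu {t, y, s} *
      sqrt (st.lam s(t, y) * st.lam s(h, s) + st.lam s(y, h) * st.lam s(t, s)) =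
    st.mu {t, y, h} * sqrt (st.lam s(y, h) * st.lam s(t, s)) +
      st.mu {t, h, s} * sqrt (st.lam s(t, y) * st.lam s(h, s))
  mu₂ : st'.mu {y, h, s} *
      sqrt (st.lam s(t, y) * st.lam s(h, s) + st.lam s(y, h) * st.lam s(t, s)) =
    st.mu {t, h, s} * sqrt (st.lam s(y, h) * st.lam s(t, s)) -
      st.mu {t, y, h} * sqrt (st.lam s(t, y) * st.lam s(h, s))
  lam_old : ∀ e, e ≠ s(y, s) → st'.lam e = st.lam e
  mu_old : ∀ T, T ≠ {t, y, s} → T ≠ {y, h, s} → st'.mu T = st.mu T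
  ori_old : ∀ e, e ≠ s(y, s) → e ≠ s(y, h) → st'.ori e = st.ori e
  ori_rev : st'.ori s(y, h) = !st.ori s(y, h)
  ori_new : st'.ori s(y, s) = decide (s < y)

theorem Flip.exists_flipAt {A : Type*} [Ring A] {N : ℕ} [NeZero N] {Pos : Set A} {sqrt : A → A}
    {st st' : PState A N} (hf : Flip Pos sqrt st st') :
    ∃ t y h s, FlipAt Pos sqrt st st' t y h s := by
  obtain ⟨p, j, r, l, hpj, hjr, hl, hm, t1, t2, hd, hf⟩ := hf
  have hpr := hpj.trans hjr
  cases ho : st.ori s(p, r) with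
  | true =>
    simp only [ho, if_true] at hf
    obtain ⟨f1, f2, f3, f4, f5, f6, f7, f8, f9⟩ := hf
    rw [Sym2.eq_swap (a := l) (b := p)] at f1 f3 f4
    refine ⟨p, j, r, l, ?_, hm, t1, t2, hd, ?_, f1, f2, f3, f4, f5, f6, f7, f8, f9⟩
    · unfold CycOrd; tauto
    · simp [ho, hpr]
  | false =>
    simp only [ho, Bool.false_eq_true, if_false] at hf
    obtain ⟨f1, f2, f3, f4, f5, f6, f7, f8, f9⟩ := hf
    have e1 : ({r, l, p} : Finset (Fin N)) = {p, r, l} := by ext; simp; tauto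
    have e2 : ({r, p, j} : Finset (Fin N)) = {p, j, r} := by ext; simp; tauto
    have e3 : ({r, l, j} : Finset (Fin N)) = {j, r, l} := by ext; simp; tauto
    have e4 : ({l, p, j} : Finset (Fin N)) = {p, j, l} := by ext; simp; tauto
    rw [Sym2.eq_swap (a := j) (b := r)] at f1 f3 f4
    rw [Sym2.eq_swap (a := p) (b := r)] at f1 hm hd ho
    rw [Sym2.eq_swap (a := j) (b := l)] at f1 f2 hd f9
    simp only [Sym2.eq_swap (a := j) (b := l)] at f5 f7
    refine ⟨r, l, p, j, ?_, hm, e1 ▸ t2, e2 ▸ t1, hd, ?_, ?_, f2, ?_, ?_, f5, ?_, f7, f8, f9⟩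
    · unfold CycOrd; tauto
    · simp [ho, hpr.le]
    · rw [e1, e2]; exact f1
    · rw [e1, e2, e3]; exact f3
    · rw [e1, e2, e4]; exact f4
    · rw [e3, e4]; exact f6

/-- Crossing of two chords in terms of the positions of their end points. -/
def CrossNat (a b c d : ℕ) : Prop :=
  (a < c ∧ c < b ∧ b < d) ∨ (a < d ∧ d < b ∧ b < c) ∨ (b < c ∧ c < a ∧ a < d) ∨
    (b < d ∧ d < a ∧ a < c) ∨ (c < a ∧ a < d ∧ d < b) ∨ (c < b ∧ b < d ∧ d < a) ∨
    (d < a ∧ a < c ∧ c < b) ∨ (d < b ∧ b < c ∧ c < a)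

theorem crossE_iff {N : ℕ} (a b c d : Fin N) :
    crossE s(a, b) s(c, d) ↔ CrossNat a b c d := by
  simp only [CrossNat]
  constructor
  · rintro ⟨p, q, r, t, h1, h2, h3, h⟩
    simp only [Sym2.eq_iff] at h
    rcases h with ⟨⟨rfl, rfl⟩ | ⟨rfl, rfl⟩, ⟨rfl, rfl⟩ | ⟨rfl, rfl⟩⟩ |
      ⟨⟨rfl, rfl⟩ | ⟨rfl, rfl⟩, ⟨rfl, rfl⟩ | ⟨rfl, rfl⟩⟩ <;>
      simp only [Fin.lt_def] at h1 h2 h3 <;> omega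
  · rintro (h | h | h | h | h | h | h | h)
    · exact ⟨a, c, b, d, h.1, h.2.1, h.2.2, by simp⟩
    · exact ⟨a, d, b, c, h.1, h.2.1, h.2.2, by simp⟩
    · exact ⟨b, c, a, d, h.1, h.2.1, h.2.2, by simp⟩
    · exact ⟨b, d, a, c, h.1, h.2.1, h.2.2, by simp⟩
    · exact ⟨c, a, d, b, h.1, h.2.1, h.2.2, by simp⟩
    · exact ⟨c, b, d, a, h.1, h.2.1, h.2.2, by simp⟩
    · exact ⟨d, a, c, b, h.1, h.2.1, h.2.2, by simp⟩
    · exact ⟨d, b, c, a, h.1, h.2.1, h.2.2, by simp⟩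

theorem isBnd.val_eq {N : ℕ} [NeZero N] {a b : Fin N} (h : isBnd s(a, b)) :
    a.val + 1 = b.val ∨ b.val + 1 = a.val ∨ (a.val = 0 ∧ b.val + 1 = N) ∨
      (b.val = 0 ∧ a.val + 1 = N) := by
  obtain ⟨i, hi⟩ := h
  have h1 : (i + 1).val = i.val + 1 ∨ (i.val + 1 = N ∧ (i + 1).val = 0) := by
    rw [Fin.val_add_eq_ite, Fin.val_one']
    have := i.isLt
    rcases Nat.lt_or_ge 1 N with h | h
    · rw [Nat.mod_eq_of_lt h]; split_ifs <;> omega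
    · have : N = 1 := by have := NeZero.pos N; omega
      subst this
      right; simp
  rw [Sym2.eq_iff] at hi
  rcases hi with ⟨rfl, rfl⟩ | ⟨rfl, rfl⟩ <;> omega

theorem isBnd.not_cross {N : ℕ} [NeZero N] {a b c d : Fin N} (h : isBnd s(a, b)) :
    ¬CrossNat a b c d := by
  have := h.val_eq
  unfold CrossNat
  rintro (h | h | h | h | h | h | h | h) <;> omega

theorem CrossNat.symm {a b c d : ℕ} (h : CrossNat a b c d) : CrossNat c d a b := by
  unfold CrossNat at *; grind

/-- The edges of the polygon dissection `D` do not cross. -/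
def NonCrossing {N : ℕ} [NeZero N] (D : Finset (Edg N)) : Prop :=
  ∀ a b c d : Fin N, isEdgeOf D s(a, b) → isEdgeOf D s(c, d) → ¬CrossNat a b c d

theorem IsTriangulation.nonCrossing {N : ℕ} [NeZero N] {D : Finset (Edg N)}
    (h : IsTriangulation D) : NonCrossing D := by
  rintro a b c d (h1 | h1) (h2 | h2) hc
  · exact h1.not_cross hc
  · exact h1.not_cross hc
  · exact h2.not_cross hc.symm
  · exact h.2.2 _ h1 _ h2 ((crossE_iff _ _ _ _).2 hc)

theorem IsTri.edge {N : ℕ} [NeZero N] {D : Finset (Edg N)} {T : Finset (Fin N)} (h : IsTri D T)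
    {u v : Fin N} (hu : u ∈ T) (hv : v ∈ T) (huv : u ≠ v) : isEdgeOf D s(u, v) :=
  h.2 u hu v hv huv

theorem isTri_of_edges {N : ℕ} [NeZero N] {D : Finset (Edg N)} {u v w : Fin N}
    (huv : u ≠ v) (huw : u ≠ w) (hvw : v ≠ w) (h1 : isEdgeOf D s(u, v)) (h2 : isEdgeOf D s(u, w))
    (h3 : isEdgeOf D s(v, w)) : IsTri D {u, v, w} := by
  refine ⟨Finset.card_eq_three.2 ⟨u, v, w, huv, huw, hvw, rfl⟩, ?_⟩
  intro a ha b hb hab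
  simp only [Finset.mem_insert, Finset.mem_singleton] at ha hb
  rcases ha with rfl | rfl | rfl <;> rcases hb with rfl | rfl | rfl <;>
    first
    | exact absurd rfl hab
    | assumption
    | (rw [Sym2.eq_swap]; assumption)

/-- Triangles on the same side of an edge of a noncrossing set coincide. -/
theorem NonCrossing.apex_unique {N : ℕ} [NeZero N] {D : Finset (Edg N)} (hD : NonCrossing D)
    {u w x z : Fin N} (huw : u < w) (hx : IsTri D {u, w, x}) (hz : IsTri D {u, w, z})
    (hxu : x ≠ u) (hxw : x ≠ w) (hzu : z ≠ u) (hzw : z ≠ w)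
    (side : (u < x ∧ x < w) ↔ (u < z ∧ z < w)) : x = z := by
  have e1 := hD u x w z (hx.edge (by simp) (by simp) hxu.symm)
    (hz.edge (by simp) (by simp) hzw.symm)
  have e2 := hD w x u z (hx.edge (by simp) (by simp) hxw.symm)
    (hz.edge (by simp) (by simp) hzu.symm)
  unfold CrossNat at e1 e2
  simp only [Fin.lt_def, ne_eq, Fin.ext_iff] at *
  grind

theorem CycOrd.ne {N : ℕ} {t y h s : Fin N} (c : CycOrd t y h s) :
    t ≠ y ∧ t ≠ h ∧ t ≠ s ∧ y ≠ h ∧ y ≠ s ∧ h ≠ s := by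
  unfold CycOrd at c
  simp only [Fin.lt_def, ne_eq, Fin.ext_iff] at *
  omega

/-- A three-element set of vertices is described by any of its listings. -/
theorem triple_perm {α : Type*} [DecidableEq α] {u w x t y s : α}
    (h : ({u, w, x} : Finset α) = {t, y, s}) (huw : u ≠ w) (hux : u ≠ x) (hwx : w ≠ x) :
    (u = t ∧ w = y ∧ x = s) ∨ (u = t ∧ w = s ∧ x = y) ∨ (u = y ∧ w = t ∧ x = s) ∨
    (u = y ∧ w = s ∧ x = t) ∨ (u = s ∧ w = t ∧ x = y) ∨ (u = s ∧ w = y ∧ x = t) := by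
  have hu : u ∈ ({t, y, s} : Finset α) := h ▸ by simp
  have hw : w ∈ ({t, y, s} : Finset α) := h ▸ by simp
  have hx : x ∈ ({t, y, s} : Finset α) := h ▸ by simp
  simp only [Finset.mem_insert, Finset.mem_singleton] at hu hw hx
  rcases hu with rfl | rfl | rfl <;> rcases hw with rfl | rfl | rfl <;>
    rcases hx with rfl | rfl | rfl <;> simp_all

theorem IsTri.ne {N : ℕ} [NeZero N] {D : Finset (Edg N)} {u v w : Fin N}
    (h : IsTri D {u, v, w}) : u ≠ v ∧ u ≠ w ∧ v ≠ w := by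
  have := h.1
  refine ⟨?_, ?_, ?_⟩ <;> rintro rfl
  · have := Finset.card_le_two (a := u) (b := w)
    simp_all
  · have := Finset.card_le_two (a := v) (b := u)
    rw [Finset.insert_comm, Finset.pair_eq_singleton] at h
    have := h.1
    have := Finset.card_le_two (a := v) (b := u)
    omega
  · have h' := h.1
    rw [Finset.pair_eq_singleton] at h'
    have := Finset.card_le_two (a := u) (b := v)
    omega

namespace FlipAt

variable {A : Type*} [Ring A] {N : ℕ} [NeZero N] {Pos : Set A} {sqrt : A → A}
  {st st' : PState A N} {t y h s : Fin N}

theorem not_isBnd (F : FlipAt Pos sqrt st st' t y h s) : ¬isBnd s(t, h) := by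
  intro hb
  refine hb.not_cross (c := y) (d := s) ?_
  have := F.cyc
  unfold CycOrd at this
  simp only [Fin.lt_def, CrossNat] at *
  grind

theorem edge_old (F : FlipAt Pos sqrt st st' t y h s) {e : Edg N}
    (he : isEdgeOf st.diag e) (hn : e ≠ s(t, h)) : isEdgeOf st'.diag e := by
  rcases he with he | he
  · exact .inl he
  · right; rw [F.diag]; simp [he, hn]

theorem edge_new (F : FlipAt Pos sqrt st st' t y h s) : isEdgeOf st'.diag s(y, s) := by
  right; rw [F.diag]; simp

theorem edge_cases (F : FlipAt Pos sqrt st st' t y h s) {e : Edg N}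
    (he : isEdgeOf st'.diag e) : (isEdgeOf st.diag e ∧ e ≠ s(t, h)) ∨ e = s(y, s) := by
  rcases he with he | he
  · exact .inl ⟨.inl he, fun h => F.not_isBnd (h ▸ he)⟩
  · rw [F.diag] at he
    simp only [Finset.mem_insert, Finset.mem_erase] at he
    rcases he with he | he
    · exact .inr he
    · exact .inl ⟨.inr he.2, he.1⟩

theorem edge_ty (F : FlipAt Pos sqrt st st' t y h s) : isEdgeOf st.diag s(t, y) :=
  F.tri₁.edge (by simp) (by simp) F.cyc.ne.1

theorem edge_yh (F : FlipAt Pos sqrt st st' t y h s) : isEdgeOf st.diag s(y, h) :=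
  F.tri₁.edge (by simp) (by simp) F.cyc.ne.2.2.2.1

theorem edge_hs (F : FlipAt Pos sqrt st st' t y h s) : isEdgeOf st.diag s(h, s) :=
  F.tri₂.edge (by simp) (by simp) F.cyc.ne.2.2.2.2.2

theorem edge_ts (F : FlipAt Pos sqrt st st' t y h s) : isEdgeOf st.diag s(t, s) :=
  F.tri₂.edge (by simp) (by simp) F.cyc.ne.2.2.1

theorem edge_th (F : FlipAt Pos sqrt st st' t y h s) : isEdgeOf st.diag s(t, h) :=
  .inr F.mem

theorem nonCrossing (F : FlipAt Pos sqrt st st' t y h s) (hD : NonCrossing st.diag) :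
    NonCrossing st'.diag := by
  have cyc := F.cyc
  unfold CycOrd at cyc
  simp only [Fin.lt_def] at cyc
  have key : ∀ a b : Fin N, isEdgeOf st.diag s(a, b) → s(a, b) ≠ s(t, h) →
      ¬CrossNat a b y s := by
    intro a b hab hne
    have e1 := hD _ _ _ _ hab F.edge_ty
    have e2 := hD _ _ _ _ hab F.edge_yh
    have e3 := hD _ _ _ _ hab F.edge_hs
    have e4 := hD _ _ _ _ hab F.edge_ts
    simp only [ne_eq, Sym2.eq_iff, Fin.ext_iff] at hne
    unfold CrossNat at *
    grind
  intro a b c d hab hcd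
  rcases F.edge_cases hab with ⟨hab, hab'⟩ | hab <;> rcases F.edge_cases hcd with ⟨hcd, hcd'⟩ | hcd
  · exact hD _ _ _ _ hab hcd
  · rw [Sym2.eq_iff] at hcd
    rcases hcd with ⟨rfl, rfl⟩ | ⟨rfl, rfl⟩
    · exact key a b hab hab'
    · have := key a b hab hab'
      unfold CrossNat at *
      grind
  · rw [Sym2.eq_iff] at hab
    have := key c d hcd hcd'
    rcases hab with ⟨rfl, rfl⟩ | ⟨rfl, rfl⟩ <;> unfold CrossNat at * <;> grind
  · rw [Sym2.eq_iff] at hab hcd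
    rcases hab with ⟨rfl, rfl⟩ | ⟨rfl, rfl⟩ <;> rcases hcd with ⟨rfl, rfl⟩ | ⟨rfl, rfl⟩ <;>
      unfold CrossNat <;> grind

theorem tri_tys (F : FlipAt Pos sqrt st st' t y h s) : IsTri st'.diag {t, y, s} := by
  obtain ⟨n1, n2, n3, n4, n5, n6⟩ := F.cyc.ne
  refine isTri_of_edges n1 n3 n5 (F.edge_old F.edge_ty ?_) (F.edge_old F.edge_ts ?_) F.edge_new
  · simp [n4, n2]
  · simp [n6.symm, n2]

theorem tri_yhs (F : FlipAt Pos sqrt st st' t y h s) : IsTri st'.diag {y, h, s} := by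
  obtain ⟨n1, n2, n3, n4, n5, n6⟩ := F.cyc.ne
  refine isTri_of_edges n4 n5 n6 (F.edge_old F.edge_yh ?_) F.edge_new (F.edge_old F.edge_hs ?_)
  · simp [n4, n1.symm]
  · simp [n2.symm, n3.symm]

theorem tri_cases (F : FlipAt Pos sqrt st st' t y h s) (hD : NonCrossing st.diag)
    {u w x : Fin N} (hT : IsTri st'.diag {u, w, x}) :
    (IsTri st.diag {u, w, x} ∧ ({u, w, x} : Finset (Fin N)) ≠ {t, y, s} ∧
      ({u, w, x} : Finset (Fin N)) ≠ {y, h, s}) ∨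
      ({u, w, x} : Finset (Fin N)) = {t, y, s} ∨ ({u, w, x} : Finset (Fin N)) = {y, h, s} := by
  have hD' := F.nonCrossing hD
  obtain ⟨n1, n2, n3, n4, n5, n6⟩ := F.cyc.ne
  by_cases h1 : ({u, w, x} : Finset (Fin N)) = {t, y, s}
  · exact .inr (.inl h1)
  by_cases h2 : ({u, w, x} : Finset (Fin N)) = {y, h, s}
  · exact .inr (.inr h2)
  refine .inl ⟨⟨hT.1, fun a ha b hb hab => ?_⟩, h1, h2⟩
  rcases F.edge_cases (hT.edge ha hb hab) with h' | h'
  · exact h'.1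
  exfalso
  have hys : y ∈ ({u, w, x} : Finset (Fin N)) ∧ s ∈ ({u, w, x} : Finset (Fin N)) := by
    rw [Sym2.eq_iff] at h'
    rcases h' with ⟨rfl, rfl⟩ | ⟨rfl, rfl⟩
    · exact ⟨ha, hb⟩
    · exact ⟨hb, ha⟩
  obtain ⟨hy, hs⟩ := hys
  obtain ⟨z, hz⟩ : ∃ z, ({u, w, x} : Finset (Fin N)) = {y, s, z} := by
    simp only [Finset.mem_insert, Finset.mem_singleton] at hy hs
    rcases hy with rfl | rfl | rfl <;> rcases hs with rfl | rfl | rfl <;>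
      first
      | exact (n5 rfl).elim
      | exact ⟨u, by ext; simp; tauto⟩
      | exact ⟨w, by ext; simp; tauto⟩
      | exact ⟨x, rfl⟩
      | exact ⟨x, by ext; simp; tauto⟩
  rw [hz] at hT h1 h2
  obtain ⟨_, m1, m2⟩ := hT.ne
  have q1 : ({t, y, s} : Finset (Fin N)) = {y, s, t} := by ext; simp; tauto
  have q2 : ({y, h, s} : Finset (Fin N)) = {y, s, h} := by ext; simp; tauto
  have q : ∀ v, ({y, s, v} : Finset (Fin N)) = {s, y, v} := fun v => Finset.insert_comm _ _ _
  have t1 := F.tri_tys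
  have t2 := F.tri_yhs
  rw [q1] at t1 h1
  rw [q2] at t2 h2
  have cyc := F.cyc
  unfold CycOrd at cyc
  rcases lt_or_gt_of_ne n5 with hlt | hlt
  · have a1 := hD'.apex_unique hlt hT t1 m1.symm m2.symm n1 n3
    have a2 := hD'.apex_unique hlt hT t2 m1.symm m2.symm n4.symm n6
    by_cases hs : y < z ∧ z < s
    · by_cases ht : y < t ∧ t < s
      · exact h1 (by rw [a1 (by grind)])
      · refine h2 (by rw [a2 (by grind)])
    · by_cases ht : y < t ∧ t < s
      · refine h2 (by rw [a2 (by grind)])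
      · exact h1 (by rw [a1 (by grind)])
  · rw [q] at hT t1 t2
    have a1 := hD'.apex_unique hlt hT t1 m2.symm m1.symm n3 n1
    have a2 := hD'.apex_unique hlt hT t2 m2.symm m1.symm n6 n4.symm
    by_cases hs : s < z ∧ z < y
    · by_cases ht : s < t ∧ t < y
      · exact h1 (by rw [a1 (by grind)])
      · refine h2 (by rw [a2 (by grind)])
    · by_cases ht : s < t ∧ t < y
      · refine h2 (by rw [a2 (by grind)])
      · exact h1 (by rw [a1 (by grind)])

end FlipAt

/-- The sign of the triangle `{u, w, x}` seen from its side `{u, w}`. -/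
def sideSign {N : ℕ} (ε : Finset (Fin N) → Bool) (u w x : Fin N) : Bool :=
  xor (ε {u, w, x}) (decide (x < u ∧ x < w))

/-- The signs `ε` of the triangles are compatible with the orientation of the diagonals. -/
def SignRel {N : ℕ} [NeZero N] (D : Finset (Edg N)) (ori : Edg N → Bool)
    (ε : Finset (Fin N) → Bool) : Prop :=
  ∀ u w x z : Fin N, u < x → x < w → (z < u ∨ w < z) → s(u, w) ∈ D → IsTri D {u, w, x} →
    IsTri D {u, w, z} → xor (sideSign ε u w x) (sideSign ε u w z) = !ori s(u, w)

theorem sideSign_comm {N : ℕ} (ε : Finset (Fin N) → Bool) (u w x : Fin N) :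
    sideSign ε u w x = sideSign ε w u x := by
  unfold sideSign
  rw [Finset.insert_comm]
  simp only [and_comm]

/-- The signs of the triangles after a flip. -/
def flipSign {N : ℕ} (ε : Finset (Fin N) → Bool) (t y h s : Fin N) : Finset (Fin N) → Bool :=
  Function.update (Function.update ε {t, y, s} (xor (sideSign ε t y h) (decide (s < t ∧ s < y))))
    {y, h, s} (xor (sideSign ε h s t) (decide (y < h ∧ y < s)))

section

variable {N : ℕ} {t y h s : Fin N} (ε : Finset (Fin N) → Bool)

theorem CycOrd.flipSign_tys (c : CycOrd t y h s) :
    flipSign ε t y h s {t, y, s} = xor (sideSign ε t y h) (decide (s < t ∧ s < y)) := by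
  obtain ⟨n1, n2, n3, n4, n5, n6⟩ := c.ne
  unfold flipSign
  rw [Function.update_of_ne, Function.update_self]
  intro e
  have : t ∈ ({y, h, s} : Finset (Fin N)) := e ▸ by simp
  simp [n1, n2, n3] at this

theorem flipSign_yhs :
    flipSign ε t y h s {y, h, s} = xor (sideSign ε h s t) (decide (y < h ∧ y < s)) := by
  unfold flipSign
  rw [Function.update_self]

end

namespace FlipAt

variable {A : Type*} [Ring A] {N : ℕ} [NeZero N] {Pos : Set A} {sqrt : A → A}
  {st st' : PState A N} {t y h s : Fin N}

theorem sign_diag (F : FlipAt Pos sqrt st st' t y h s) {ε : Finset (Fin N) → Bool}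
    (hε : SignRel st.diag st.ori ε) :
    xor (sideSign ε t h y) (sideSign ε t h s) = !decide (t < h) := by
  have cyc := F.cyc
  unfold CycOrd at cyc
  have t1 := F.tri₁
  have q : ({t, y, h} : Finset (Fin N)) = {t, h, y} := by rw [Finset.pair_comm]
  rw [q] at t1
  have t2 := F.tri₂
  rcases lt_or_gt_of_ne F.cyc.ne.2.1 with hlt | hlt
  · have := hε t h y s (by grind) (by grind) (by grind) F.mem t1 F.tri₂
    rw [this, F.ori]
  · rw [Finset.insert_comm] at t1 t2
    have := hε h t s y (by grind) (by grind) (by grind) (Sym2.eq_swap ▸ F.mem) t2 t1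
    rw [sideSign_comm, sideSign_comm ε t h s, Bool.xor_comm, this, Sym2.eq_swap, F.ori]

theorem sign_facts (F : FlipAt Pos sqrt st st' t y h s) {ε : Finset (Fin N) → Bool}
    (hε : SignRel st.diag st.ori ε) :
    sideSign (flipSign ε t y h s) t s y = sideSign ε t s h ∧
    sideSign (flipSign ε t y h s) t y s = sideSign ε t y h ∧
    sideSign (flipSign ε t y h s) y h s = (!sideSign ε y h t) ∧
    sideSign (flipSign ε t y h s) h s y = sideSign ε h s t ∧
    xor (sideSign (flipSign ε t y h s) y s t) (sideSign (flipSign ε t y h s) y s h) =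
      xor (decide (s < y)) true := by
  have key := F.sign_diag hε
  have cyc := F.cyc
  have q1 : ({t, s, y} : Finset (Fin N)) = {t, y, s} := by rw [Finset.pair_comm]
  have q2 : ({t, s, h} : Finset (Fin N)) = {t, h, s} := by rw [Finset.pair_comm]
  have q3 : ({t, h, y} : Finset (Fin N)) = {t, y, h} := by rw [Finset.pair_comm]
  have q4 : ({y, h, t} : Finset (Fin N)) = {t, y, h} := by ext; simp; tauto
  have q5 : ({h, s, y} : Finset (Fin N)) = {y, h, s} := by ext; simp; tauto
  have q6 : ({h, s, t} : Finset (Fin N)) = {t, h, s} := by ext; simp; tauto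
  have q7 : ({y, s, t} : Finset (Fin N)) = {t, y, s} := by ext; simp; tauto
  have q8 : ({y, s, h} : Finset (Fin N)) = {y, h, s} := by ext; simp; tauto
  have a1 := F.cyc.flipSign_tys ε
  have a2 := flipSign_yhs (t := t) (y := y) (h := h) (s := s) ε
  simp only [sideSign, q1, q2, q3, q4, q5, q6, q7, q8, a1, a2] at key ⊢
  clear q1 q2 q3 q4 q5 q6 q7 q8 a1 a2
  generalize ε {t, y, h} = E1 at *
  generalize ε {t, h, s} = E2 at *
  unfold CycOrd at cyc
  rcases cyc with ⟨c1, c2, c3⟩ | ⟨c1, c2, c3⟩ | ⟨c1, c2, c3⟩ | ⟨c1, c2, c3⟩ <;>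
    simp [c1, c2, c3, c1.not_gt, c2.not_gt, c3.not_gt, c1.trans c2, c2.trans c3,
      (c1.trans c2).not_gt, (c2.trans c3).not_gt, (c1.trans (c2.trans c3)).not_gt,
      c1.trans (c2.trans c3)] at key ⊢ <;>
    revert key <;> cases E1 <;> cases E2 <;> simp

theorem trace_sign (F : FlipAt Pos sqrt st st' t y h s) (hD : NonCrossing st.diag)
    {ε : Finset (Fin N) → Bool} (hε : SignRel st.diag st.ori ε) {u w x : Fin N}
    (hT : IsTri st'.diag {u, w, x}) (hne : s(u, w) ≠ s(y, s)) :
    ∃ z, IsTri st.diag {u, w, z} ∧ (u < x ∧ x < w ↔ u < z ∧ z < w) ∧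
      sideSign (flipSign ε t y h s) u w x =
        xor (sideSign ε u w z) (decide (s(u, w) = s(y, h) ∧ x = s)) := by
  obtain ⟨n1, n2, n3, n4, n5, n6⟩ := F.cyc.ne
  obtain ⟨f1, f2, f3, f4, -⟩ := F.sign_facts hε
  have cyc := F.cyc
  obtain ⟨m1, m2, m3⟩ := hT.ne
  have t1 := F.tri₁
  have t2 := F.tri₂
  rcases F.tri_cases hD hT with ⟨h1, h2, h3⟩ | h1 | h1
  · refine ⟨x, h1, Iff.rfl, ?_⟩
    rw [sideSign, flipSign, Function.update_of_ne h3, Function.update_of_ne h2, ← sideSign]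
    have : ¬(s(u, w) = s(y, h) ∧ x = s) := by
      rintro ⟨e1, rfl⟩
      apply h3
      rw [Sym2.eq_iff] at e1
      rcases e1 with ⟨rfl, rfl⟩ | ⟨rfl, rfl⟩
      · rfl
      · rw [Finset.insert_comm]
    rw [decide_eq_false this, Bool.xor_false]
  · clear hε hD hT
    rcases triple_perm h1 m1 m2 m3 with ⟨rfl, rfl, rfl⟩ | ⟨rfl, rfl, rfl⟩ | ⟨rfl, rfl, rfl⟩ |
      ⟨rfl, rfl, rfl⟩ | ⟨rfl, rfl, rfl⟩ | ⟨rfl, rfl, rfl⟩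
    · refine ⟨h, t1, ?_, ?_⟩
      · unfold CycOrd at cyc; grind
      · simp [f2, n1, n2, n4]
    · refine ⟨h, by rwa [Finset.pair_comm], ?_, ?_⟩
      · unfold CycOrd at cyc; grind
      · simp [f1, n5]
    · refine ⟨h, by rwa [Finset.insert_comm], ?_, ?_⟩
      · unfold CycOrd at cyc; grind
      · rw [sideSign_comm, f2, sideSign_comm]; simp [n2, n1, n4]
    · exact absurd rfl hne
    · refine ⟨h, by rwa [Finset.insert_comm, Finset.pair_comm], ?_, ?_⟩
      · unfold CycOrd at cyc; grind
      · rw [sideSign_comm, f1, sideSign_comm]; simp [n5]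
    · exact absurd Sym2.eq_swap hne
  · clear hε hD hT
    have t2' : IsTri st.diag {h, s, t} := by
      rwa [show ({h, s, t} : Finset (Fin N)) = {t, h, s} by ext; simp; tauto]
    have t1' : IsTri st.diag {y, h, t} := by
      rwa [show ({y, h, t} : Finset (Fin N)) = {t, y, h} by ext; simp; tauto]
    rcases triple_perm h1 m1 m2 m3 with ⟨rfl, rfl, rfl⟩ | ⟨rfl, rfl, rfl⟩ | ⟨rfl, rfl, rfl⟩ |
      ⟨rfl, rfl, rfl⟩ | ⟨rfl, rfl, rfl⟩ | ⟨rfl, rfl, rfl⟩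
    · refine ⟨t, t1', ?_, ?_⟩
      · unfold CycOrd at cyc; grind
      · simp [f3]
    · exact absurd rfl hne
    · refine ⟨t, by rwa [Finset.insert_comm], ?_, ?_⟩
      · unfold CycOrd at cyc; grind
      · rw [sideSign_comm, f3, sideSign_comm]; simp
    · refine ⟨t, t2', ?_, ?_⟩
      · unfold CycOrd at cyc; grind
      · simp [f4, n5]
    · exact absurd Sym2.eq_swap hne
    · refine ⟨t, by rwa [Finset.insert_comm], ?_, ?_⟩
      · unfold CycOrd at cyc; grind
      · rw [sideSign_comm, f4, sideSign_comm]; simp [n5]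

theorem signRel (F : FlipAt Pos sqrt st st' t y h s) (hD : NonCrossing st.diag)
    {ε : Finset (Fin N) → Bool} (hε : SignRel st.diag st.ori ε) :
    SignRel st'.diag st'.ori (flipSign ε t y h s) := by
  intro u w x z hux hxw hz huw tx tz
  have hD' := F.nonCrossing hD
  have hlt := hux.trans hxw
  obtain ⟨n1, n2, n3, n4, n5, n6⟩ := F.cyc.ne
  by_cases e : s(u, w) = s(y, s)
  · obtain ⟨-, -, -, -, f5⟩ := F.sign_facts hε
    rw [e, F.ori_new]
    have t1 := F.tri_tys
    have t2 := F.tri_yhs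
    have q1 : ({t, y, s} : Finset (Fin N)) = {y, s, t} := by ext; simp; tauto
    have q2 : ({y, h, s} : Finset (Fin N)) = {y, s, h} := by ext; simp; tauto
    have cyc := F.cyc
    rw [q1] at t1
    rw [q2] at t2
    have hzu : z ≠ u := by grind
    have hzw : z ≠ w := by grind
    rw [Sym2.eq_iff] at e
    unfold CycOrd at cyc
    rcases e with ⟨rfl, rfl⟩ | ⟨rfl, rfl⟩
    · by_cases ht : u < t ∧ t < w
      · have a1 := hD'.apex_unique hlt tx t1 hux.ne' hxw.ne n1 n3 (by grind)
        have a2 := hD'.apex_unique hlt tz t2 hzu hzw n4.symm n6 (by grind)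
        rw [a1, a2, f5]; simp
      · have a1 := hD'.apex_unique hlt tx t2 hux.ne' hxw.ne n4.symm n6 (by grind)
        have a2 := hD'.apex_unique hlt tz t1 hzu hzw n1 n3 (by grind)
        rw [a1, a2, Bool.xor_comm, f5]; simp
    · rw [Finset.insert_comm] at t1 t2
      rw [sideSign_comm, sideSign_comm _ u w]
      by_cases ht : u < t ∧ t < w
      · have a1 := hD'.apex_unique hlt tx t1 hux.ne' hxw.ne n3 n1 (by grind)
        have a2 := hD'.apex_unique hlt tz t2 hzu hzw n6 n4.symm (by grind)
        rw [a1, a2, f5]; simp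
      · have a1 := hD'.apex_unique hlt tx t2 hux.ne' hxw.ne n6 n4.symm (by grind)
        have a2 := hD'.apex_unique hlt tz t1 hzu hzw n3 n1 (by grind)
        rw [a1, a2, Bool.xor_comm, f5]; simp
  · obtain ⟨x0, tx0, sx, ex⟩ := F.trace_sign hD hε tx e
    obtain ⟨z0, tz0, sz, ez⟩ := F.trace_sign hD hε tz e
    have huw' : s(u, w) ∈ st.diag := by
      rw [F.diag] at huw
      simp only [Finset.mem_insert, e, false_or, Finset.mem_erase] at huw
      exact huw.2
    have hx0 := sx.1 ⟨hux, hxw⟩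
    have hz0 : z0 < u ∨ w < z0 := by
      have := tz0.ne
      grind
    have := hε u w x0 z0 hx0.1 hx0.2 hz0 huw' tx0 tz0
    rw [ex, ez]
    by_cases e' : s(u, w) = s(y, h)
    · rw [e'] at this ⊢
      rw [F.ori_rev]
      have hs : xor (decide (x = s)) (decide (z = s)) = true := by
        have t2 := F.tri_yhs
        have hor : x = s ∨ z = s := by
          rw [Sym2.eq_iff] at e'
          rcases e' with ⟨rfl, rfl⟩ | ⟨rfl, rfl⟩
          · by_cases hs : u < s ∧ s < w
            · exact .inl (hD'.apex_unique hlt tx t2 hux.ne' hxw.ne n5.symm n6.symm (by grind))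
            · exact .inr (hD'.apex_unique hlt tz t2 (by grind) (by grind) n5.symm n6.symm
                (by grind))
          · rw [Finset.insert_comm] at t2
            by_cases hs : u < s ∧ s < w
            · exact .inl (hD'.apex_unique hlt tx t2 hux.ne' hxw.ne n6.symm n5.symm (by grind))
            · exact .inr (hD'.apex_unique hlt tz t2 (by grind) (by grind) n6.symm n5.symm
                (by grind))
        have : x ≠ z := by grind
        by_cases hx : x = s
        · have : z ≠ s := fun h => this (hx.trans h.symm)
          simp [hx, this]
        · have : z = s := by tauto
          simp [hx, this]
      revert this hs
      simp only [true_and]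
      generalize sideSign ε u w x0 = b1
      generalize sideSign ε u w z0 = b2
      generalize st.ori s(y, h) = b3
      generalize decide (x = s) = b4
      generalize decide (z = s) = b5
      revert b1 b2 b3 b4 b5
      decide
    · rw [F.ori_old _ e e']
      simpa [e'] using this

end FlipAt

/-- The sign encoded by a Boolean. -/
def sgn (b : Bool) : ℤ := if b then -1 else 1

theorem sgn_not (b : Bool) : sgn (!b) = -sgn b := by cases b <;> rfl

theorem sgn_eq (b : Bool) : sgn b = 1 ∨ sgn b = -1 := by cases b <;> simp [sgn]

open SVec

/-- The square roots on the positive cone restrict to the even part. -/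
structure EvenOdd.PosData {A : Type*} [Ring A] (P : EvenOdd A) (Pos : Set A) (sqrt : A → A)
    (sq : P.E → P.E) : Prop where
  cone : IsSqrtCone {e | P.even e ∈ Pos} sq
  lift : ∀ z ∈ Pos, ∃ e, P.even e = z
  even_sq : ∀ e, P.even e ∈ Pos → P.even (sq e) = sqrt (P.even e)

namespace FlipAt

variable {A : Type*} [Ring A] {N : ℕ} [NeZero N] {Pos : Set A} {sqrt : A → A}
  {st st' : PState A N} {t y h s : Fin N}

theorem flip_frame (F : FlipAt Pos sqrt st st' t y h s) {P : EvenOdd A} {sq : P.E → P.E}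
    (hP : P.PosData Pos sqrt sq) {T Y H S : SVec P.E P.O} {η : ℤ} (hη : η = 1 ∨ η = -1)
    (hty : P.even (br P.β T Y) = st.lam s(t, y) ∧ st.lam s(t, y) ∈ Pos)
    (hyh : P.even (br P.β Y H) = st.lam s(y, h) ∧ st.lam s(y, h) ∈ Pos)
    (hhs : P.even (br P.β H S) = st.lam s(h, s) ∧ st.lam s(h, s) ∈ Pos)
    (hts : P.even (br P.β T S) = st.lam s(t, s) ∧ st.lam s(t, s) ∈ Pos)
    (hth : P.even (br P.β T H) = st.lam s(t, h) ∧ st.lam s(t, h) ∈ Pos)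
    (hθ : ∃ m, P.odd m = st.mu {t, y, h} ∧ IsMu P.β sq m T Y H η)
    (hσ : ∃ m, P.odd m = st.mu {t, h, s} ∧ IsMu P.β sq m T H S η) :
    P.even (br P.β Y S) = st'.lam s(y, s) ∧
    (∃ m, P.odd m = st'.mu {t, y, s} ∧ IsMu P.β sq m T Y S η) ∧
    (∃ m, P.odd m = st'.mu {y, h, s} ∧ IsMu P.β sq m Y H S η) := by
  obtain ⟨θ, eθ, hθ⟩ := hθ
  obtain ⟨σ, eσ, hσ⟩ := hσ
  obtain ⟨f, ef⟩ := hP.lift _ F.pos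
  have pty : br P.β T Y ∈ {e | P.even e ∈ Pos} := by simp only [Set.mem_ofPred_eq, hty]
  have pyh : br P.β Y H ∈ {e | P.even e ∈ Pos} := by simp only [Set.mem_ofPred_eq, hyh]
  have phs : br P.β H S ∈ {e | P.even e ∈ Pos} := by simp only [Set.mem_ofPred_eq, hhs]
  have pts : br P.β T S ∈ {e | P.even e ∈ Pos} := by simp only [Set.mem_ofPred_eq, hts]
  have pth : br P.β T H ∈ {e | P.even e ∈ Pos} := by simp only [Set.mem_ofPred_eq, hth]
  have pf : f ∈ {e | P.even e ∈ Pos} := by simp only [Set.mem_ofPred_eq, ef, F.pos]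
  have C := hP.cone
  have pac := C.mul _ pty _ phs
  have pbd := C.mul _ pyh _ pts
  have pS := C.add _ pac _ pbd
  have pabcd := C.mul _ (C.mul _ (C.mul _ pty _ pyh) _ phs) _ pts
  have eac := hP.even_sq _ pac
  have ebd := hP.even_sq _ pbd
  have eS := hP.even_sq _ pS
  have eabcd := hP.even_sq _ pabcd
  simp only [map_add, map_mul, hty.1, hyh.1, hhs.1, hts.1] at eac ebd eS eabcd
  have uS := C.unit _ (C.sq_mem _ pS)
  obtain ⟨i, hi⟩ := uS.exists_right_inv
  have uS' : IsUnit (P.even (sq (br P.β T Y * br P.β H S + br P.β Y H * br P.β T S))) :=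
    uS.map P.even
  have h1 := F.lam_new
  have h2 := F.mu₁
  have h3 := F.mu₂
  rw [← eac, ← ebd, ← eS, ← eθ, ← eσ, ← P.even_comm, ← P.even_comm, ← P.odd_smul, ← P.odd_smul]
    at h2 h3
  rw [← map_add] at h2
  rw [← map_sub] at h3
  generalize hS : sq (br P.β T Y * br P.β H S + br P.β Y H * br P.β T S) = R at *
  have lift (w : P.O) {a : A} (ha : a * P.even R = P.odd w) : P.odd (i • w) = a := by
    refine uS'.mul_right_cancel ?_
    rw [ha, ← P.even_comm, ← P.odd_smul, smul_smul, hi, one_smul]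
  have e2 := lift _ h2
  have e3 := lift _ h3
  have key := flip_vectors P.alt P.cyc C (f := f) hη pty pyh phs pts pth pf hθ hσ ?_
    (θ' := i • (sq (br P.β Y H * br P.β T S) • θ + sq (br P.β T Y * br P.β H S) • σ))
    (σ' := i • (sq (br P.β Y H * br P.β T S) • σ - sq (br P.β T Y * br P.β H S) • θ))
    (by rw [hS, smul_smul, hi, one_smul]) (by rw [hS, smul_smul, hi, one_smul])
  · exact ⟨by rw [← key.1, ef], ⟨_, e2, key.2.1⟩, ⟨_, e3, key.2.2⟩⟩
  · apply P.even_inj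
    simp only [map_add, map_mul, hty.1, hyh.1, hhs.1, hts.1, hth.1, ef, eabcd, ← P.odd_mul, eθ, eσ]
    exact h1

theorem sign_cases (F : FlipAt Pos sqrt st st' t y h s) {ε : Finset (Fin N) → Bool}
    (hε : SignRel st.diag st.ori ε) :
    (t < y ∧ y < h ∧ h < s ∧ ε {t, h, s} = ε {t, y, h} ∧
      flipSign ε t y h s {t, y, s} = ε {t, y, h} ∧ flipSign ε t y h s {y, h, s} = ε {t, y, h}) ∨
    (y < h ∧ h < s ∧ s < t ∧ ε {t, h, s} = ε {t, y, h} ∧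
      flipSign ε t y h s {t, y, s} = ε {t, y, h} ∧
      flipSign ε t y h s {y, h, s} = !ε {t, y, h}) ∨
    (h < s ∧ s < t ∧ t < y ∧ ε {t, h, s} = (!ε {t, y, h}) ∧
      flipSign ε t y h s {t, y, s} = ε {t, y, h} ∧
      flipSign ε t y h s {y, h, s} = !ε {t, y, h}) ∨
    (s < t ∧ t < y ∧ y < h ∧ ε {t, h, s} = (!ε {t, y, h}) ∧
      flipSign ε t y h s {t, y, s} = (!ε {t, y, h}) ∧
      flipSign ε t y h s {y, h, s} = !ε {t, y, h}) := by
  have key := F.sign_diag hε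
  have cyc := F.cyc
  have q3 : ({t, h, y} : Finset (Fin N)) = {t, y, h} := by rw [Finset.pair_comm]
  have q6 : ({h, s, t} : Finset (Fin N)) = {t, h, s} := by ext; simp; tauto
  have a1 := F.cyc.flipSign_tys ε
  have a2 := flipSign_yhs (t := t) (y := y) (h := h) (s := s) ε
  simp only [sideSign, q3, q6, a1, a2] at key ⊢
  clear q3 q6 a1 a2
  generalize ε {t, y, h} = E1 at *
  generalize ε {t, h, s} = E2 at *
  unfold CycOrd at cyc
  rcases cyc with ⟨c1, c2, c3⟩ | ⟨c1, c2, c3⟩ | ⟨c1, c2, c3⟩ | ⟨c1, c2, c3⟩ <;>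
    simp [c1, c2, c3, c1.not_gt, c2.not_gt, c3.not_gt, c1.trans c2, c2.trans c3,
      (c1.trans c2).not_gt, (c2.trans c3).not_gt, (c1.trans (c2.trans c3)).not_gt,
      c1.trans (c2.trans c3)] at key ⊢ <;>
    revert key <;> cases E1 <;> cases E2 <;> simp

end FlipAt

/-- The supervectors `v` realize the state `st`. -/
structure Realizes {A : Type*} [Ring A] {N : ℕ} [NeZero N] (P : EvenOdd A) (Pos : Set A)
    (sq : P.E → P.E) (v : Fin N → SVec P.E P.O) (st : PState A N) : Prop where
  nonCrossing : NonCrossing st.diag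
  lam : ∀ i j, i < j → isEdgeOf st.diag s(i, j) →
    P.even (br P.β (v i) (v j)) = st.lam s(i, j) ∧ st.lam s(i, j) ∈ Pos
  mu : ∃ ε, SignRel st.diag st.ori ε ∧ ∀ i j k T, i < j → j < k → T = {i, j, k} →
    IsTri st.diag T → ∃ m, P.odd m = st.mu T ∧ IsMu P.β sq m (v i) (v j) (v k) (sgn (ε T))

theorem triple_rot {α : Type*} [DecidableEq α] (a b c : α) :
    ({a, b, c} : Finset α) = {b, c, a} := by
  ext; simp; tauto

namespace Realizes

variable {A : Type*} [Ring A] {N : ℕ} [NeZero N] {Pos : Set A} {sqrt : A → A} {P : EvenOdd A}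
  {sq : P.E → P.E} {v : Fin N → SVec P.E P.O} {st st' : PState A N}

theorem flipAt {t y h s : Fin N} (hst : Realizes P Pos sq v st) (hP : P.PosData Pos sqrt sq)
    (F : FlipAt Pos sqrt st st' t y h s) : Realizes P Pos sq v st' := by
  obtain ⟨ε, hε, hmu⟩ := hst.mu
  have hD := hst.nonCrossing
  have q1 := hst.lam
  have q2 (i j) (hij : i < j) (hd : isEdgeOf st.diag s(j, i)) :
      P.even (-br P.β (v j) (v i)) = st.lam s(j, i) ∧ st.lam s(j, i) ∈ Pos := by
    rw [← br_swap P.alt, Sym2.eq_swap]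
    exact q1 i j hij (Sym2.eq_swap ▸ hd)
  have rot {m : P.O} {U V W : SVec P.E P.O} {η : ℤ} :
      IsMu P.β sq m V W U.opp (-η) ↔ IsMu P.β sq m U V W η := IsMu.rot P.alt P.cyc
  have rot' {m : P.O} {U V W : SVec P.E P.O} {η : ℤ} :
      IsMu P.β sq m V W U.opp η ↔ IsMu P.β sq m U V W (-η) := by
    have := rot (m := m) (U := U) (V := V) (W := W) (η := -η)
    rwa [neg_neg] at this
  have sorted {T : Finset (Fin N)} {a b c : Fin N} (ab : a < b) (bc : b < c) (e : T = {a, b, c})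
      (hm : ∃ m, P.odd m = st'.mu T ∧
        IsMu P.β sq m (v a) (v b) (v c) (sgn (flipSign ε t y h s T))) :
      ∀ i j k, i < j → j < k → T = {i, j, k} → ∃ m, P.odd m = st'.mu T ∧
        IsMu P.β sq m (v i) (v j) (v k) (sgn (flipSign ε t y h s T)) := by
    intro i j k ij jk e'
    have := triple_perm (e'.symm.trans e) ij.ne (ij.trans jk).ne jk.ne
    obtain ⟨rfl, rfl, rfl⟩ : i = a ∧ j = b ∧ k = c := by grind
    exact hm
  have combine
      (h1 : P.even (br P.β (v y) (v s)) = st'.lam s(y, s) ∧ y < s ∨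
        P.even (br P.β (v s) (v y)) = st'.lam s(y, s) ∧ s < y)
      (h2 : ∀ i j k, i < j → j < k → {t, y, s} = ({i, j, k} : Finset (Fin N)) →
        ∃ m, P.odd m = st'.mu {t, y, s} ∧
          IsMu P.β sq m (v i) (v j) (v k) (sgn (flipSign ε t y h s {t, y, s})))
      (h3 : ∀ i j k, i < j → j < k → {y, h, s} = ({i, j, k} : Finset (Fin N)) →
        ∃ m, P.odd m = st'.mu {y, h, s} ∧
          IsMu P.β sq m (v i) (v j) (v k) (sgn (flipSign ε t y h s {y, h, s}))) :
      (∀ i j, i < j → s(i, j) = s(y, s) → P.even (br P.β (v i) (v j)) = st'.lam s(i, j)) ∧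
      (∀ i j k T, i < j → j < k → T = {i, j, k} → T = {t, y, s} ∨ T = {y, h, s} →
        ∃ m, P.odd m = st'.mu T ∧
          IsMu P.β sq m (v i) (v j) (v k) (sgn (flipSign ε t y h s T))) := by
    refine ⟨fun i j hij e => ?_, ?_⟩
    · rw [e]
      rw [Sym2.eq_iff] at e
      rcases e with ⟨rfl, rfl⟩ | ⟨rfl, rfl⟩ <;> rcases h1 with h1 | h1
      · exact h1.1
      · exact absurd h1.2 hij.not_gt
      · exact absurd h1.2 hij.not_gt
      · exact h1.1
    · rintro i j k T ij jk e (rfl | rfl)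
      · exact h2 i j k ij jk e
      · exact h3 i j k ij jk e
  have main : (∀ i j, i < j → s(i, j) = s(y, s) → P.even (br P.β (v i) (v j)) = st'.lam s(i, j)) ∧
      (∀ i j k T, i < j → j < k → T = {i, j, k} → T = {t, y, s} ∨ T = {y, h, s} →
        ∃ m, P.odd m = st'.mu T ∧
          IsMu P.β sq m (v i) (v j) (v k) (sgn (flipSign ε t y h s T))) := by
    rcases F.sign_cases hε with ⟨c1, c2, c3, s1, s2, s3⟩ | ⟨c1, c2, c3, s1, s2, s3⟩ |
      ⟨c1, c2, c3, s1, s2, s3⟩ | ⟨c1, c2, c3, s1, s2, s3⟩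
    · have hθ := hmu t y h _ c1 c2 rfl F.tri₁
      have hσ := hmu t h s _ (c1.trans c2) c3 rfl F.tri₂
      rw [s1] at hσ
      obtain ⟨r1, r2, r3⟩ := F.flip_frame hP (sgn_eq _) (q1 _ _ c1 F.edge_ty) (q1 _ _ c2 F.edge_yh)
        (q1 _ _ c3 F.edge_hs) (q1 _ _ (c1.trans (c2.trans c3)) F.edge_ts)
        (q1 _ _ (c1.trans c2) F.edge_th) hθ hσ
      exact combine (.inl ⟨r1, c2.trans c3⟩) (sorted c1 (c2.trans c3) rfl (by rwa [s2]))
        (sorted c2 c3 rfl (by rwa [s3]))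
    · obtain ⟨θ, eθ, hθ⟩ := hmu y h t _ c1 (c2.trans c3) (triple_rot _ _ _) F.tri₁
      obtain ⟨σ, eσ, hσ⟩ := hmu h s t _ c2 c3 (triple_rot _ _ _) F.tri₂
      rw [s1] at hσ
      obtain ⟨r1, ⟨m2, e2, r2⟩, m3, e3, r3⟩ := F.flip_frame hP (T := v t) (Y := (v y).opp)
        (H := (v h).opp) (S := (v s).opp) (sgn_eq (ε {t, y, h}))
        (by rw [br_opp_right]; exact q2 _ _ (c1.trans (c2.trans c3)) F.edge_ty)
        (by rw [br_opp_right, br_opp_left, neg_neg]; exact q1 _ _ c1 F.edge_yh)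
        (by rw [br_opp_right, br_opp_left, neg_neg]; exact q1 _ _ c2 F.edge_hs)
        (by rw [br_opp_right]; exact q2 _ _ c3 F.edge_ts)
        (by rw [br_opp_right]; exact q2 _ _ (c2.trans c3) F.edge_th)
        ⟨θ, eθ, by rwa [rot', rot', neg_neg]⟩ ⟨σ, eσ, by rwa [rot', rot', neg_neg]⟩
      rw [br_opp_right, br_opp_left, neg_neg] at r1
      rw [rot', rot', neg_neg] at r2
      rw [rot', rot', rot', neg_neg] at r3
      exact combine (.inl ⟨r1, c1.trans c2⟩)
        (sorted (c1.trans c2) c3 (triple_rot _ _ _) ⟨m2, e2, by rwa [s2]⟩)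
        (sorted c1 c2 rfl ⟨m3, e3, by rwa [s3, sgn_not]⟩)
    · obtain ⟨θ, eθ, hθ⟩ := hmu h t y _ (c1.trans c2) c3 ((triple_rot _ _ _).symm) F.tri₁
      obtain ⟨σ, eσ, hσ⟩ := hmu h s t _ c1 c2 (triple_rot _ _ _) F.tri₂
      rw [s1] at hσ
      obtain ⟨r1, ⟨m2, e2, r2⟩, m3, e3, r3⟩ := F.flip_frame hP (T := v t) (Y := v y)
        (H := (v h).opp) (S := (v s).opp) (sgn_eq (!ε {t, y, h})) (q1 _ _ c3 F.edge_ty)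
        (by rw [br_opp_right]; exact q2 _ _ (c1.trans (c2.trans c3)) F.edge_yh)
        (by rw [br_opp_right, br_opp_left, neg_neg]; exact q1 _ _ c1 F.edge_hs)
        (by rw [br_opp_right]; exact q2 _ _ c2 F.edge_ts)
        (by rw [br_opp_right]; exact q2 _ _ (c1.trans c2) F.edge_th)
        ⟨θ, eθ, by rwa [rot', sgn_not, neg_neg]⟩ ⟨σ, eσ, by rwa [rot', rot', neg_neg]⟩
      rw [br_opp_right, ← br_swap P.alt] at r1
      rw [rot', sgn_not, neg_neg] at r2
      rw [rot', rot', neg_neg] at r3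
      exact combine (.inr ⟨r1, c2.trans c3⟩)
        (sorted c2 c3 ((triple_rot _ _ _).symm) ⟨m2, e2, by rwa [s2]⟩)
        (sorted c1 (c2.trans c3) (triple_rot _ _ _) ⟨m3, e3, by rwa [s3]⟩)
    · have hθ := hmu t y h _ c2 c3 rfl F.tri₁
      obtain ⟨σ, eσ, hσ⟩ := hmu s t h _ c1 (c2.trans c3) ((triple_rot _ _ _).symm) F.tri₂
      rw [s1] at hσ
      obtain ⟨r1, ⟨m2, e2, r2⟩, m3, e3, r3⟩ := F.flip_frame hP (T := v t) (Y := v y)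
        (H := v h) (S := (v s).opp) (sgn_eq (ε {t, y, h})) (q1 _ _ c2 F.edge_ty)
        (q1 _ _ c3 F.edge_yh)
        (by rw [br_opp_right]; exact q2 _ _ (c1.trans (c2.trans c3)) F.edge_hs)
        (by rw [br_opp_right]; exact q2 _ _ c1 F.edge_ts) (q1 _ _ (c2.trans c3) F.edge_th)
        hθ ⟨σ, eσ, by rwa [rot', ← sgn_not]⟩
      rw [br_opp_right, ← br_swap P.alt] at r1
      rw [rot', ← sgn_not] at r2 r3
      exact combine (.inr ⟨r1, c1.trans c2⟩)
        (sorted c1 c2 ((triple_rot _ _ _).symm) ⟨m2, e2, by rwa [s2]⟩)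
        (sorted (c1.trans c2) c3 ((triple_rot _ _ _).symm) ⟨m3, e3, by rwa [s3]⟩)
  refine ⟨F.nonCrossing hD, fun i j hij hd => ?_, flipSign ε t y h s, F.signRel hD hε,
    fun i j k T hij hjk hT hd => ?_⟩
  · by_cases e : s(i, j) = s(y, s)
    · exact ⟨main.1 i j hij e, by rw [e]; exact F.pos⟩
    · rw [F.lam_old _ e]
      rcases F.edge_cases hd with ⟨hd, -⟩ | hd
      · exact q1 i j hij hd
      · exact absurd hd e
  · subst hT
    rcases F.tri_cases hD hd with ⟨h1, h2, h3⟩ | h1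
    · rw [F.mu_old _ h2 h3, flipSign, Function.update_of_ne h3, Function.update_of_ne h2]
      exact hmu _ _ _ _ hij hjk rfl h1
    · exact main.2 i j k _ hij hjk rfl h1

theorem of_reachable (hst : Realizes P Pos sq v st) (hP : P.PosData Pos sqrt sq)
    (h : Relation.ReflTransGen (Flip Pos sqrt) st st') : Realizes P Pos sq v st' := by
  induction h with
  | refl => exact hst
  | tail _ h ih =>
    obtain ⟨t, y, h, s, F⟩ := h.exists_flipAt
    exact ih.flipAt hP F

end Realizes

/-- The part of the polygon between `i` and `j` is subdivided into triangles by edges of `D`. -/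
inductive Triangulated {N : ℕ} [NeZero N] (D : Finset (Edg N)) : Fin N → Fin N → Prop
  | base (i j : Fin N) : i.val + 1 = j → Triangulated D i j
  | step (i k j : Fin N) : i < k → k < j → isEdgeOf D s(i, k) → isEdgeOf D s(k, j) →
      Triangulated D i k → Triangulated D k j → Triangulated D i j

theorem isBnd_of_succ {N : ℕ} [NeZero N] {i j : Fin N} (h : i.val + 1 = j) : isBnd s(i, j) := by
  refine ⟨i, congrArg _ (Fin.ext ?_)⟩
  have := j.isLt
  rw [Fin.val_add_eq_ite, Fin.val_one', Nat.mod_eq_of_lt (show 1 < N by omega),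
    if_neg (by omega), h]

theorem isBnd_zero_last {n : ℕ} : isBnd s((0 : Fin (n + 3)), Fin.last (n + 2)) := by
  refine ⟨Fin.last (n + 2), ?_⟩
  rw [Sym2.eq_swap, Fin.last_add_one]

/-- A noncrossing family of chords spanning at least two steps has fewer members below any
given chord than steps, with equality only for a full triangulation. -/
theorem triangulated_of_card {N : ℕ} [NeZero N] {D : Finset (Edg N)}
    (G : Finset (Fin N × Fin N)) (hG : ∀ e ∈ G, e.1.val + 1 < e.2.val ∧ isEdgeOf D s(e.1, e.2))
    (hcross : ∀ u v w x, (u, w) ∈ G → (v, x) ∈ G → u < v → v < w → w < x → False) :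
    ∀ (d : ℕ) (i j : Fin N), i < j → j.val - i.val = d →
      {e ∈ G | i ≤ e.1 ∧ e.2 ≤ j}.card + 1 ≤ d ∧
        ({e ∈ G | i ≤ e.1 ∧ e.2 ≤ j}.card + 1 = d →
          isEdgeOf D s(i, j) ∧ Triangulated D i j) := by
  intro d
  induction d using Nat.strong_induction_on with
  | _ d ih =>
    intro i j hij hd
    have hij' : i.val < j.val := hij
    by_cases h1 : i.val + 1 = j.val
    · have h0 : {e ∈ G | i ≤ e.1 ∧ e.2 ≤ j} = ∅ := by
        rw [Finset.filter_eq_empty_iff]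
        rintro ⟨u, w⟩ he ⟨h2, h3⟩
        have := (hG _ he).1
        simp only [Fin.le_def] at h2 h3 this
        omega
      rw [h0, Finset.card_empty]
      exact ⟨by omega, fun _ => ⟨.inl (isBnd_of_succ h1), .base i j h1⟩⟩
    have hne : {k : Fin N | k < j ∧ (i.val + 1 = k.val ∨ (i, k) ∈ G)}.toFinset.Nonempty := by
      refine ⟨⟨i.val + 1, by omega⟩, ?_⟩
      simp only [Set.mem_toFinset, Set.mem_ofPred_eq, Fin.lt_def, true_or, and_true]
      omega
    obtain ⟨k, hk, hmax⟩ := Finset.exists_max_image _ id hne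
    simp only [Set.mem_toFinset, Set.mem_ofPred_eq, id] at hk hmax
    obtain ⟨hkj, hk⟩ := hk
    have hik : i < k := by
      rcases hk with hk | hk
      · exact Fin.lt_def.2 (by omega)
      · have := (hG _ hk).1
        exact Fin.lt_def.2 (by simp only at this; omega)
    have hik' : i.val < k.val := hik
    have hkj' : k.val < j.val := hkj
    have sub : {e ∈ G | i ≤ e.1 ∧ e.2 ≤ j} ⊆
        ({e ∈ G | i ≤ e.1 ∧ e.2 ≤ k} ∪ {e ∈ G | k ≤ e.1 ∧ e.2 ≤ j}) ∪ {e ∈ G | e = (i, j)} := by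
      rintro ⟨u, w⟩ he
      simp only [Finset.mem_union, Finset.mem_filter] at he ⊢
      obtain ⟨he, hu, hw⟩ := he
      by_contra! hcon
      obtain ⟨⟨c1, c2⟩, c3⟩ := hcon
      have c1 := c1 he
      have c2 : u < k := by
        by_contra! hh
        exact (c2 he hh).not_ge hw
      have c3 := c3 he
      have := (hG _ he).1
      rcases hu.eq_or_lt with rfl | hu
      · have hw : w < j := lt_of_le_of_ne hw (by rintro rfl; exact c3 rfl)
        exact (hmax w ⟨hw, .inr he⟩).not_gt (c1 le_rfl)
      · rcases hk with hk | hk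
        · simp only [Fin.lt_def] at hu c2; omega
        · exact hcross _ _ _ _ hk he hu c2 (c1 hu.le)
    have cardle := (Finset.card_le_card sub).trans (Finset.card_union_le _ _)
    have cardle2 := Finset.card_union_le {e ∈ G | i ≤ e.1 ∧ e.2 ≤ k} {e ∈ G | k ≤ e.1 ∧ e.2 ≤ j}
    have hs : {e ∈ G | e = (i, j)}.card ≤ 1 := by
      refine Finset.card_le_one.2 fun a ha b hb => ?_
      rw [(Finset.mem_filter.1 ha).2, (Finset.mem_filter.1 hb).2]
    obtain ⟨l1, l2⟩ := ih _ (by omega) i k hik rfl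
    obtain ⟨r1, r2⟩ := ih _ (by omega) k j hkj rfl
    refine ⟨by omega, fun heq => ?_⟩
    obtain ⟨l3, l4⟩ := l2 (by omega)
    obtain ⟨r3, r4⟩ := r2 (by omega)
    refine ⟨?_, .step i k j hik hkj l3 r3 l4 r4⟩
    obtain ⟨e, he⟩ := Finset.card_pos.1 (show 0 < {e ∈ G | e = (i, j)}.card by omega)
    obtain ⟨he, rfl⟩ := Finset.mem_filter.1 he
    exact (hG _ he).2

theorem IsTriangulation.triangulated {n : ℕ} {D : Finset (Edg (n + 3))}
    (h : IsTriangulation D) : Triangulated D 0 (Fin.last (n + 2)) := by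
  classical
  have hmem (e) (he : e ∈ D) : s(e.inf, e.sup) ∈ D ∧ e.inf < e.sup := by
    induction e using Sym2.ind with
    | _ x y =>
      have hxy : x ≠ y := fun hh => (h.2.1 _ he).2 (Sym2.mk_isDiag_iff.2 hh)
      rcases hxy.lt_or_gt with hlt | hlt
      · simpa [hlt.le, hlt] using he
      · simpa [hlt.le, hlt, Sym2.eq_swap] using he
  have hinf (e : Edg (n + 3)) : s(e.inf, e.sup) = e := by
    induction e using Sym2.ind with
    | _ x y =>
      rcases le_total x y with hlt | hlt
      · simp [hlt]
      · simp [hlt, Sym2.eq_swap]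
  have hnot : (0, Fin.last (n + 2)) ∉ D.image fun e => (e.inf, e.sup) := by
    intro hm
    obtain ⟨e, he, h1⟩ := Finset.mem_image.1 hm
    rw [Prod.mk.injEq] at h1
    have := (hmem e he).1
    rw [h1.1, h1.2] at this
    exact (h.2.1 _ this).1 isBnd_zero_last
  have hcard : (insert (0, Fin.last (n + 2)) (D.image fun e => (e.inf, e.sup))).card = n + 1 := by
    rw [Finset.card_insert_of_notMem hnot, Finset.card_image_of_injective]
    · have := h.1; omega
    · intro e f hef
      rw [Prod.mk.injEq] at hef
      rw [← hinf e, ← hinf f, hef.1, hef.2]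
  have hG : ∀ e ∈ insert (0, Fin.last (n + 2)) (D.image fun e => (e.inf, e.sup)),
      e.1.val + 1 < e.2.val ∧ isEdgeOf D s(e.1, e.2) := by
    intro e he
    rcases Finset.mem_insert.1 he with rfl | he
    · exact ⟨by simp, .inl isBnd_zero_last⟩
    · obtain ⟨f, hf, rfl⟩ := Finset.mem_image.1 he
      obtain ⟨h1, h2⟩ := hmem f hf
      refine ⟨?_, .inr h1⟩
      have h3 : f.inf.val + 1 ≠ f.sup.val := fun hh => (h.2.1 _ h1).1 (isBnd_of_succ hh)
      have h4 : f.inf.val < f.sup.val := h2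
      change f.inf.val + 1 < f.sup.val
      omega
  refine ((triangulated_of_card _ hG ?_ _ 0 (Fin.last (n + 2)) Fin.last_pos rfl).2 ?_).2
  · intro u v w x h1 h2 h3 h4 h5
    refine h.nonCrossing _ _ _ _ (hG _ h1).2 (hG _ h2).2 ?_
    simp only [CrossNat]
    grind
  · rw [Finset.filter_true_of_mem, hcard]
    · simp
    · exact fun e _ => ⟨Fin.zero_le _, Fin.le_last _⟩

/-- The vectors `v` and signs `ε` realize the data `o, lam, mu` between the vertices `i` and `j`,
the triangle below the chord from `i` to `j` having sign `e`. -/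
structure RealizesOn {A : Type*} [Ring A] {N : ℕ} [NeZero N] (P : EvenOdd A) (sq : P.E → P.E)
    (D : Finset (Edg N)) (o : Edg N → Bool) (lam : Edg N → A) (mu : Finset (Fin N) → A)
    (i j : Fin N) (v : Fin N → SVec P.E P.O) (ε : Finset (Fin N) → Bool) (e : Bool) : Prop where
  lam : ∀ u w, u < w → i ≤ u → w ≤ j → isEdgeOf D s(u, w) →
    P.even (br P.β (v u) (v w)) = lam s(u, w)
  mu : ∀ u x w, u < x → x < w → i ≤ u → w ≤ j → IsTri D {u, x, w} →
    ∃ m, P.odd m = mu {u, x, w} ∧ IsMu P.β sq m (v u) (v x) (v w) (sgn (ε {u, x, w}))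
  sign : ∀ u w x z, u < x → x < w → (i ≤ z ∧ z < u ∨ w < z ∧ z ≤ j) → i ≤ u → w ≤ j →
    s(u, w) ∈ D → IsTri D {u, w, x} → IsTri D {u, w, z} →
      xor (sideSign ε u w x) (sideSign ε u w z) = !o s(u, w)
  root : ∀ x, i < x → x < j → IsTri D {i, x, j} → ε {i, x, j} = e

namespace NonCrossing

variable {N : ℕ} [NeZero N] {D : Finset (Edg N)} {i k j : Fin N}

theorem edge_trichotomy (hD : NonCrossing D)
    (eik : isEdgeOf D s(i, k)) (ekj : isEdgeOf D s(k, j)) {u w : Fin N} (hiu : i ≤ u)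
    (hwj : w ≤ j) (e : isEdgeOf D s(u, w)) : w ≤ k ∨ k ≤ u ∨ (u = i ∧ w = j) := by
  by_contra! hc
  obtain ⟨c1, c2, c3⟩ := hc
  rcases hiu.eq_or_lt with h | h
  · exact hD _ _ _ _ e ekj (.inl ⟨c2, c1, show w < j from lt_of_le_of_ne hwj (c3 h.symm)⟩)
  · exact hD _ _ _ _ eik e (.inl ⟨h, c2, c1⟩)

theorem tri_trichotomy (hD : NonCrossing D)
    (eik : isEdgeOf D s(i, k)) (ekj : isEdgeOf D s(k, j)) {u x w : Fin N} (hiu : i ≤ u)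
    (hux : u < x) (hxw : x < w) (hwj : w ≤ j) (T : IsTri D {u, x, w}) :
    w ≤ k ∨ k ≤ u ∨ (u = i ∧ x = k ∧ w = j) := by
  have h1 := hD.edge_trichotomy eik ekj hiu hwj
    (T.edge (by simp) (by simp) (hux.trans hxw).ne)
  have h2 := hD.edge_trichotomy eik ekj hiu (hxw.le.trans hwj)
    (T.edge (by simp) (by simp) hux.ne)
  have h3 := hD.edge_trichotomy eik ekj (hiu.trans hux.le) hwj
    (T.edge (by simp) (by simp) hxw.ne)
  grind

end NonCrossing

section Glue

variable {N : ℕ} (i k j : Fin N) (εL εR : Finset (Fin N) → Bool) (e : Bool)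

/-- The signs obtained by gluing the two sides of a triangle. -/
def glueSign (T : Finset (Fin N)) : Bool :=
  if T = {i, k, j} then e else if ∀ x ∈ T, x ≤ k then εL T else εR T

variable {i k j}

theorem glueSign_left {a b c : Fin N} (hkj : k < j) (ha : a ≤ k) (hb : b ≤ k) (hc : c ≤ k) :
    glueSign i k j εL εR e {a, b, c} = εL {a, b, c} := by
  rw [glueSign, if_neg, if_pos]
  · simp [ha, hb, hc]
  · intro h
    have : j ∈ ({a, b, c} : Finset (Fin N)) := h ▸ by simp
    simp only [Finset.mem_insert, Finset.mem_singleton] at this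
    grind

theorem glueSign_right {a b c : Fin N} (hik : i < k) (ha : k ≤ a) (hb : k ≤ b) (hc : k ≤ c)
    (h : k < a ∨ k < b ∨ k < c) :
    glueSign i k j εL εR e {a, b, c} = εR {a, b, c} := by
  rw [glueSign, if_neg, if_neg]
  · simp only [Finset.mem_insert, Finset.mem_singleton, forall_eq_or_imp, forall_eq]
    grind
  · intro h
    have : i ∈ ({a, b, c} : Finset (Fin N)) := h ▸ by simp
    simp only [Finset.mem_insert, Finset.mem_singleton] at this
    grind

end Glue

namespace RealizesOn

variable {A : Type*} [Ring A] {N : ℕ} [NeZero N] {P : EvenOdd A} {sq : P.E → P.E}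
    {D : Finset (Edg N)} {o : Edg N → Bool} {lam : Edg N → A} {mu : Finset (Fin N) → A}
    {i k j : Fin N}

theorem glue (hD : NonCrossing D) (hik : i < k) (hkj : k < j) (eik : isEdgeOf D s(i, k))
    (ekj : isEdgeOf D s(k, j)) {v vL vR : Fin N → SVec P.E P.O} {εL εR : Finset (Fin N) → Bool}
    {e : Bool}
    (hL : RealizesOn P sq D o lam mu i k vL εL (xor e (!o s(i, k))))
    (hR : RealizesOn P sq D o lam mu k j vR εR (xor (!e) (!o s(k, j))))
    (heL : ∀ x, x ≤ k → v x = vL x) (heR : ∀ x, k ≤ x → v x = vR x)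
    (hlam : P.even (br P.β (v i) (v j)) = lam s(i, j))
    (hmu : ∃ m, P.odd m = mu {i, k, j} ∧ IsMu P.β sq m (v i) (v k) (v j) (sgn e)) :
    RealizesOn P sq D o lam mu i j v (glueSign i k j εL εR e) e where
  lam u w huw hiu hwj he := by
    rcases hD.edge_trichotomy eik ekj hiu hwj he with h | h | ⟨rfl, rfl⟩
    · rw [heL u (huw.le.trans h), heL w h]
      exact hL.lam u w huw hiu h he
    · rw [heR u h, heR w (h.trans huw.le)]
      exact hR.lam u w huw h hwj he
    · exact hlam
  mu u x w hux hxw hiu hwj T := by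
    rcases hD.tri_trichotomy eik ekj hiu hux hxw hwj T with h | h | ⟨rfl, rfl, rfl⟩
    · have hx := hxw.le.trans h
      have hu := hux.le.trans hx
      rw [heL u hu, heL x hx, heL w h, glueSign_left _ _ _ hkj hu hx h]
      exact hL.mu u x w hux hxw hiu h T
    · have hx := h.trans hux.le
      have hw := hx.trans hxw.le
      rw [heR u h, heR x hx, heR w hw,
        glueSign_right _ _ _ hik h hx hw (.inr (.inl (h.trans_lt hux)))]
      exact hR.mu u x w hux hxw h hwj T
    · rwa [glueSign, if_pos rfl]
  sign u w x z hux hxw hz hiu hwj he Tx Tz := by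
    have huw := hux.trans hxw
    have root : glueSign i k j εL εR e {i, k, j} = e := if_pos rfl
    rcases hD.edge_trichotomy eik ekj hiu hwj (.inr he) with h | h | ⟨rfl, rfl⟩
    · have hx := hxw.le.trans h
      have hu := hux.le.trans hx
      simp only [sideSign]
      rw [glueSign_left _ _ _ hkj hu h hx]
      by_cases hzk : z ≤ k
      · rw [glueSign_left _ _ _ hkj hu h hzk]
        exact hL.sign u w x z hux hxw (by grind) hiu h he Tx Tz
      · push Not at hzk
        obtain ⟨rfl, rfl, rfl⟩ : u = i ∧ w = k ∧ z = j := by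
          have := hD.tri_trichotomy eik ekj (u := u) (x := w) (w := z) hiu huw (by grind)
            (by grind) Tz
          grind
        have := hL.root x hux hxw (by rwa [Finset.pair_comm])
        rw [Finset.pair_comm, this, root]
        simp [hux.not_gt, hkj.not_gt]
        cases e <;> simp
    · have hx := h.trans hux.le
      have hw := hx.trans hxw.le
      simp only [sideSign]
      rw [glueSign_right _ _ _ hik h hw hx (by grind)]
      by_cases hzk : k ≤ z
      · rw [glueSign_right _ _ _ hik h hw hzk (by grind)]
        exact hR.sign u w x z hux hxw (by grind) h hwj he Tx Tz
      · push Not at hzk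
        have Tz' : IsTri D {z, u, w} := by rwa [triple_rot]
        obtain ⟨rfl, rfl, rfl⟩ : u = k ∧ w = j ∧ z = i := by
          have := hD.tri_trichotomy eik ekj (u := z) (x := u) (w := w) (by grind)
            (by grind) huw hwj Tz'
          grind
        have := hR.root x hux hxw (by rwa [Finset.pair_comm])
        rw [Finset.pair_comm, this, ← triple_rot z u w, root]
        simp [hux.not_gt, hzk, hzk.trans huw]
        cases e <;> simp
    · grind
  root x hix hxj T := by
    obtain ⟨-, rfl, -⟩ : i = i ∧ x = k ∧ j = j := by
      have := hD.tri_trichotomy eik ekj le_rfl hix hxj le_rfl T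
      grind
    exact if_pos rfl

end RealizesOn

/-- Prescribed vectors at `i` and `j` extend to a realization between `i` and `j`. -/
theorem Triangulated.exists_realizesOn {A : Type*} [Ring A] {N : ℕ} [NeZero N] {P : EvenOdd A}
    {Pos : Set A} {sqrt : A → A} {sq : P.E → P.E} (hP : P.PosData Pos sqrt sq)
    {D : Finset (Edg N)} (hD : NonCrossing D)
    (o : Edg N → Bool) {lam : Edg N → A} {mu : Finset (Fin N) → A}
    (hlam : ∀ e, isEdgeOf D e → lam e ∈ Pos) (hmu : ∀ T, IsTri D T → ∃ m, P.odd m = mu T)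
    {i j : Fin N} (h : Triangulated D i j) (hij : isEdgeOf D s(i, j)) (a b : SVec P.E P.O)
    (hab : P.even (br P.β a b) = lam s(i, j)) (e : Bool) :
    ∃ v ε, v i = a ∧ v j = b ∧ RealizesOn P sq D o lam mu i j v ε e := by
  classical
  induction h generalizing a b e with
  | base i j hs =>
    have hs' : i < j := Fin.lt_def.2 (by omega)
    refine ⟨fun x => if x = i then a else b, fun _ => e, if_pos rfl, if_neg hs'.ne', ?_, ?_, ?_,
      fun _ _ _ _ => rfl⟩
    · intro u w huw hu hw he
      obtain ⟨rfl, rfl⟩ : u = i ∧ w = j := by grind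
      rwa [if_pos rfl, if_neg hs'.ne']
    · intro u x w hux hxw hu hw
      grind
    · intro u w x z hux hxw hz hu hw
      grind
  | step i k j hik hkj eik ekj _ _ ihL ihR =>
    have T : IsTri D {i, k, j} := isTri_of_edges hik.ne (hik.trans hkj).ne hkj.ne eik hij ekj
    obtain ⟨x, hx⟩ := hP.lift _ (hlam _ eik)
    obtain ⟨y, hy⟩ := hP.lift _ (hlam _ ekj)
    obtain ⟨m, hm⟩ := hmu _ T
    have pos : br P.β a b ∈ {e | P.even e ∈ Pos} := by
      simp only [Set.mem_ofPred_eq, hab]; exact hlam _ hij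
    obtain ⟨c, h1, h2, h3⟩ := SVec.exists_apex P.alt P.cyc a b (hP.cone.unit _ pos) x y
      (sgn e • (sq x * sq y * sq (br P.β a b)) • m)
    obtain ⟨vL, εL, l1, l2, hL⟩ := ihL eik a c (h1 ▸ hx) (xor e (!o s(i, k)))
    obtain ⟨vR, εR, r1, r2, hR⟩ := ihR ekj c b (h2 ▸ hy) (xor (!e) (!o s(k, j)))
    have hvi : (if i ≤ k then vL i else vR i) = a := by simp [hik.le, l1]
    have hvk : (if k ≤ k then vL k else vR k) = c := by simp [l2]
    have hvj : (if j ≤ k then vL j else vR j) = b := by simp [hkj.not_ge, r2]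
    refine ⟨fun x => if x ≤ k then vL x else vR x, glueSign i k j εL εR e, hvi, hvj,
      RealizesOn.glue hD hik hkj eik ekj hL hR (fun x hx => if_pos hx) ?_ ?_ ⟨m, hm, ?_⟩⟩
    · intro x hx
      rcases hx.eq_or_lt with rfl | hx
      · simp [l2, r1]
      · exact if_neg hx.not_ge
    · rw [hvi, hvj, hab]
    · rw [hvi, hvj, hvk, IsMu, h1, h2, h3, smul_smul]
      rcases sgn_eq e with h | h <;> simp [h]

/-- The initial data on a triangulation are realized by supervectors. -/
theorem IsTriangulation.exists_realizes {A : Type*} [Ring A] {n : ℕ} {P : EvenOdd A}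
    {Pos : Set A} {sqrt : A → A} {sq : P.E → P.E} (hP : P.PosData Pos sqrt sq)
    {D : Finset (Edg (n + 3))} (hD : IsTriangulation D)
    (o : Edg (n + 3) → Bool) {lam : Edg (n + 3) → A} {mu : Finset (Fin (n + 3)) → A}
    (hlam : ∀ e, isEdgeOf D e → lam e ∈ Pos) (hmu : ∀ T, IsTri D T → ∃ m, P.odd m = mu T) :
    ∃ v, Realizes P Pos sq v ⟨D, o, lam, mu⟩ := by
  have he : isEdgeOf D s((0 : Fin (n + 3)), Fin.last (n + 2)) := .inl isBnd_zero_last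
  obtain ⟨x, hx⟩ := hP.lift _ (hlam _ he)
  obtain ⟨v, ε, -, -, h⟩ := hD.triangulated.exists_realizesOn hP hD.nonCrossing o hlam hmu he
    ⟨1, 0, 0⟩ ⟨0, x, 0⟩ (by simp [br, hx]) true
  refine ⟨v, hD.nonCrossing, fun i j hij hd => ⟨h.lam i j hij (Fin.zero_le _) (Fin.le_last _) hd,
    hlam _ hd⟩, ε, ?_, ?_⟩
  · intro u w x z hux hxw hz
    exact h.sign u w x z hux hxw (hz.imp (fun hz => ⟨Fin.zero_le _, hz⟩)
      fun hz => ⟨hz, Fin.le_last _⟩) (Fin.zero_le _) (Fin.le_last _)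
  · rintro i j k T hij hjk rfl T'
    exact h.mu i j k hij hjk (Fin.zero_le _) (Fin.le_last _) T'

theorem forall_mem_triple {α : Type*} [DecidableEq α] {p : α → α → α → Prop}
    (hs : ∀ u v w, p u v w → p v u w) (hr : ∀ u v w, p u v w → p v w u) (h0 : ∀ u v, p u u v)
    {i j k : α} (h : p i j k) {u w x : α} (hu : u ∈ ({i, j, k} : Finset α))
    (hw : w ∈ ({i, j, k} : Finset α)) (hx : x ∈ ({i, j, k} : Finset α)) : p u w x := by
  have h2 := hr _ _ _ h
  have h3 := hr _ _ _ h2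
  have h4 := hs _ _ _ h
  have h5 := hr _ _ _ h4
  have h6 := hr _ _ _ h5
  have s2 (a b : α) : p a b a := hr _ _ _ (h0 a b)
  have s3 (a b : α) : p a b b := hr _ _ _ (s2 b a)
  simp only [Finset.mem_insert, Finset.mem_singleton] at hu hw hx
  rcases hu with rfl | rfl | rfl <;> rcases hw with rfl | rfl | rfl <;>
    rcases hx with rfl | rfl | rfl <;>
    first
    | assumption
    | exact h0 _ _
    | exact s2 _ _
    | exact s3 _ _

theorem eq_of_card_eq_three {α : Type*} [DecidableEq α] {T : Finset α} (hT : T.card = 3)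
    {p q u w : α} (hp : p ∈ T) (hq : q ∈ T) (hu : u ∈ T) (hw : w ∈ T) (hpq : p ≠ q)
    (hup : u ≠ p) (huq : u ≠ q) (hwp : w ≠ p) (hwq : w ≠ q) : u = w := by
  by_contra huw
  have h : ({p, q, u, w} : Finset α) ⊆ T := by
    simp only [Finset.insert_subset_iff, Finset.singleton_subset_iff]
    exact ⟨hp, hq, hu, hw⟩
  have h4 : ({p, q, u, w} : Finset α).card = 4 := by
    simp [Finset.card_insert_of_notMem, hpq, huw, hup.symm, huq.symm, hwp.symm, hwq.symm]
  have := Finset.card_le_card h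
  omega

namespace EvenOdd

variable {A : Type*} [Ring A] {P : EvenOdd A}

/-- Square roots on a central cone lift to the even part. -/
theorem exists_posData {Pos : Set A} {sqrt : A → A}
    (hPosAdd : ∀ p ∈ Pos, ∀ q ∈ Pos, p + q ∈ Pos)
    (hPosMul : ∀ p ∈ Pos, ∀ q ∈ Pos, p * q ∈ Pos)
    (hPosInv : ∀ p ∈ Pos, Ring.inverse p ∈ Pos)
    (hPosUnit : ∀ p ∈ Pos, IsUnit p)
    (hsqrtSq : ∀ p ∈ Pos, sqrt p * sqrt p = p)
    (hsqrtMem : ∀ p ∈ Pos, sqrt p ∈ Pos)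
    (lift : ∀ z ∈ Pos, ∃ e, P.even e = z) : ∃ sq, P.PosData Pos sqrt sq := by
  have even_sq (e) (he : P.even e ∈ Pos) :
      P.even (Function.invFun P.even (sqrt (P.even e))) = sqrt (P.even e) :=
    Function.invFun_eq (lift _ (hsqrtMem _ he))
  refine ⟨fun e => Function.invFun P.even (sqrt (P.even e)), ⟨?_, ?_, ?_, ?_, ?_⟩, lift, even_sq⟩
  · intro p hp q hq
    simp only [Set.mem_ofPred_eq, map_add] at *
    exact hPosAdd _ hp _ hq
  · intro p hp q hq
    simp only [Set.mem_ofPred_eq, map_mul] at *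
    exact hPosMul _ hp _ hq
  · intro p hp
    obtain ⟨i, hi⟩ := lift _ (hPosInv _ hp)
    refine IsUnit.of_mul_eq_one i (P.even_inj ?_)
    rw [map_mul, hi, map_one, Ring.mul_inverse_cancel _ (hPosUnit _ hp)]
  · intro p hp
    simp only [Set.mem_ofPred_eq] at *
    rw [even_sq p hp]
    exact hsqrtMem _ hp
  · intro p hp
    apply P.even_inj
    rw [map_mul, even_sq p hp, hsqrtSq _ hp]

variable [Algebra ℚ A] (R : Subalgebra ℚ A)

theorem odd3_mem_swap {u v w : SVec P.E P.O} (h : P.odd (odd3 P.β u v w) ∈ R) :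
    P.odd (odd3 P.β v u w) ∈ R := by
  rw [odd3_swap P.alt, map_neg]
  exact neg_mem h

theorem odd3_mem_rot {u v w : SVec P.E P.O} (h : P.odd (odd3 P.β u v w) ∈ R) :
    P.odd (odd3 P.β v w u) ∈ R := by
  rwa [odd3_rot P.alt P.cyc]

theorem odd3_mem_self (u v : SVec P.E P.O) : P.odd (odd3 P.β u u v) ∈ R := by
  rw [odd3_self P.alt, map_zero]
  exact zero_mem R

theorem br_mem_swap {u v : SVec P.E P.O} (h : P.even (br P.β u v) ∈ R) :
    P.even (br P.β v u) ∈ R := by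
  rw [br_swap P.alt, map_neg]
  exact neg_mem h

theorem odd3_mem_of_mem {N : ℕ} (v : Fin N → SVec P.E P.O) {i j k : Fin N}
    (h : P.odd (odd3 P.β (v i) (v j) (v k)) ∈ R) {u w x : Fin N}
    (hu : u ∈ ({i, j, k} : Finset (Fin N))) (hw : w ∈ ({i, j, k} : Finset (Fin N)))
    (hx : x ∈ ({i, j, k} : Finset (Fin N))) : P.odd (odd3 P.β (v u) (v w) (v x)) ∈ R := by
  exact forall_mem_triple (p := fun i j k => P.odd (odd3 P.β (v i) (v j) (v k)) ∈ R)
    (fun _ _ _ => odd3_mem_swap R) (fun _ _ _ => odd3_mem_rot R)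
    (fun _ _ => odd3_mem_self R _ _) h hu hw hx

variable {R}

theorem br_mem_step {p q a u : SVec P.E P.O} {y : A} (hy : y ∈ R)
    (hpq : y * P.even (br P.β p q) = 1) (h0 : P.even (br P.β p q) ∈ R)
    (h1 : P.even (br P.β a q) ∈ R) (h2 : P.even (br P.β p u) ∈ R)
    (h3 : P.even (br P.β a p) ∈ R) (h4 : P.even (br P.β q u) ∈ R)
    (h5 : P.odd (odd3 P.β a p q) ∈ R) (h6 : P.odd (odd3 P.β p q u) ∈ R) :
    P.even (br P.β a u) ∈ R := by
  have h := congrArg P.even (ptolemy P.alt P.cyc p q a u)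
  simp only [map_mul, map_add, map_sub, ← P.odd_mul] at h
  have e : P.even (br P.β a u) = y * (y * (P.even (br P.β p q) * P.even (br P.β p q) *
      P.even (br P.β a u))) := by
    rw [mul_assoc (P.even (br P.β p q)), ← mul_assoc y (P.even (br P.β p q)), hpq, one_mul,
      ← mul_assoc, hpq, one_mul]
  rw [e, h]
  exact mul_mem hy (mul_mem hy (add_mem (mul_mem h0 (sub_mem (mul_mem h1 h2) (mul_mem h3 h4)))
    (mul_mem h5 h6)))

theorem odd3_mem_step {p q a u : SVec P.E P.O} {y : A} (hy : y ∈ R)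
    (hpq : y * P.even (br P.β p q) = 1) (h2 : P.even (br P.β p u) ∈ R)
    (h3 : P.even (br P.β a p) ∈ R)
    (h5 : P.odd (odd3 P.β a p q) ∈ R) (h6 : P.odd (odd3 P.β p q u) ∈ R) :
    P.odd (odd3 P.β a p u) ∈ R := by
  have h := congrArg P.odd (odd3_ptolemy_left P.alt P.cyc p q a u)
  simp only [map_add, P.odd_smul] at h
  have e : P.odd (odd3 P.β p a u) = y * (P.even (br P.β p q) * P.odd (odd3 P.β p a u)) := by
    rw [← mul_assoc, hpq, one_mul]
  refine odd3_mem_swap R ?_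
  rw [e, h]
  exact mul_mem hy (add_mem (mul_mem h2 (odd3_mem_swap R h5)) (mul_mem (br_mem_swap R h3) h6))

/-- Membership in a subalgebra propagates along a chain of triangles. -/
theorem br_mem_of_chain {N m : ℕ} (v : Fin N → SVec P.E P.O) (tri : Fin (m + 1) → Finset (Fin N))
    (dsp : Fin m → Fin N × Fin N) (hcard : ∀ k, (tri k).card = 3)
    (hsep : ∀ k : Fin m, (dsp k).1 ∈ tri k.castSucc ∧ (dsp k).2 ∈ tri k.castSucc ∧
      (dsp k).1 ∈ tri k.succ ∧ (dsp k).2 ∈ tri k.succ)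
    (hne : ∀ k, (dsp k).1 ≠ (dsp k).2)
    (hbr : ∀ k, ∀ u ∈ tri k, ∀ w ∈ tri k, P.even (br P.β (v u) (v w)) ∈ R)
    (hinv : ∀ k, ∀ u ∈ tri k, ∀ w ∈ tri k, u ≠ w →
      ∃ y ∈ R, y * P.even (br P.β (v u) (v w)) = 1)
    (hodd : ∀ k, ∀ u ∈ tri k, ∀ w ∈ tri k, ∀ x ∈ tri k,
      P.odd (odd3 P.β (v u) (v w) (v x)) ∈ R)
    {a : Fin N} (ha : a ∈ tri 0) (k : Fin (m + 1)) :
    ∀ u ∈ tri k, ∀ w ∈ tri k, P.even (br P.β (v a) (v u)) ∈ R ∧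
      P.odd (odd3 P.β (v a) (v u) (v w)) ∈ R := by
  induction k using Fin.induction with
  | zero => exact fun u hu w hw => ⟨hbr 0 a ha u hu, hodd 0 a ha u hu w hw⟩
  | succ k ih =>
    obtain ⟨p1, q1, p2, q2⟩ := hsep k
    have hpq := hne k
    generalize (dsp k).1 = p at *
    generalize (dsp k).2 = q at *
    obtain ⟨y, hy, ey⟩ := hinv _ p p2 q q2 hpq
    obtain ⟨z, hz, ez⟩ := hinv _ q q2 p p2 hpq.symm
    have apq := ih p p1 q q1
    have aqp := ih q q1 p p1
    have hb (u) (hu : u ∈ tri k.succ) : P.even (br P.β (v a) (v u)) ∈ R :=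
      br_mem_step hy ey (hbr _ p p2 q q2) aqp.1 (hbr _ p p2 u hu) apq.1 (hbr _ q q2 u hu) apq.2
        (hodd _ p p2 q q2 u hu)
    have hp (u) (hu : u ∈ tri k.succ) : P.odd (odd3 P.β (v a) (v p) (v u)) ∈ R :=
      odd3_mem_step hy ey (hbr _ p p2 u hu) apq.1 apq.2 (hodd _ p p2 q q2 u hu)
    have hq (u) (hu : u ∈ tri k.succ) : P.odd (odd3 P.β (v a) (v q) (v u)) ∈ R :=
      odd3_mem_step hz ez (hbr _ q q2 u hu) aqp.1 aqp.2 (hodd _ q q2 p p2 u hu)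
    have sw {u w : SVec P.E P.O} (h : P.odd (odd3 P.β (v a) u w) ∈ R) :
        P.odd (odd3 P.β (v a) w u) ∈ R := odd3_mem_rot R (odd3_mem_swap R h)
    refine fun u hu w hw => ⟨hb u hu, ?_⟩
    by_cases u1 : u = p
    · subst u1; exact hp w hw
    by_cases u2 : u = q
    · subst u2; exact hq w hw
    by_cases w1 : w = p
    · subst w1; exact sw (hp u hu)
    by_cases w2 : w = q
    · subst w2; exact sw (hq u hu)
    obtain rfl := eq_of_card_eq_three (hcard k.succ) p2 q2 hu hw hpq u1 u2 w1 w2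
    exact odd3_mem_rot R (odd3_mem_rot R (odd3_mem_self R _ _))

end EvenOdd

section

variable {A : Type*} [Ring A] {P : EvenOdd A} {Pos : Set A} {sqrt : A → A} {sq : P.E → P.E}

theorem EvenOdd.PosData.one_mem (hP : P.PosData Pos sqrt sq)
    (hPosMul : ∀ p ∈ Pos, ∀ q ∈ Pos, p * q ∈ Pos) (hPosInv : ∀ p ∈ Pos, Ring.inverse p ∈ Pos)
    {p : A} (hp : p ∈ Pos) : (1 : A) ∈ Pos := by
  obtain ⟨e, rfl⟩ := hP.lift p hp
  rw [← Ring.mul_inverse_cancel _ ((hP.cone.unit e hp).map P.even)]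
  exact hPosMul _ hp _ (hPosInv _ hp)

/-- Clearing the denominators of the weight of a triangle. -/
theorem EvenOdd.PosData.mul_mul_sqrt (hP : P.PosData Pos sqrt sq)
    (hPosMul : ∀ p ∈ Pos, ∀ q ∈ Pos, p * q ∈ Pos) (hPosInv : ∀ p ∈ Pos, Ring.inverse p ∈ Pos)
    {x y z : A} (hx : x ∈ Pos) (hy : y ∈ Pos) (hz : z ∈ Pos) :
    x * y * sqrt (z * Ring.inverse (x * y)) = sqrt x * sqrt y * sqrt z := by
  have hxy := hPosMul _ hx _ hy
  have h1 := hP.one_mem hPosMul hPosInv hx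
  obtain ⟨i, hi⟩ := hP.lift _ (hPosInv _ hxy)
  have hip := hi ▸ hPosInv _ hxy
  obtain ⟨x, rfl⟩ := hP.lift _ hx
  obtain ⟨y, rfl⟩ := hP.lift _ hy
  obtain ⟨z, rfl⟩ := hP.lift _ hz
  have C := hP.cone
  have e1 : x * y * i = 1 := by
    apply P.even_inj
    rw [map_mul, hi, map_mul, map_one, Ring.mul_inverse_cancel]
    rw [← map_mul] at hxy ⊢
    exact (C.unit _ hxy).map P.even
  have hzi := C.mul _ hz _ hip
  rw [← hi, ← map_mul P.even z i, ← hP.even_sq _ hzi, ← hP.even_sq _ hx, ← hP.even_sq _ hy,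
    ← hP.even_sq _ hz, C.sq_mul hz hip]
  simp only [← map_mul]
  congr 1
  have e2 : sq x * sq y * sq i = 1 := by
    refine C.eq_of_sq (C.mul _ (C.mul _ (C.sq_mem _ hx) _ (C.sq_mem _ hy)) _ (C.sq_mem _ hip))
      (by simpa using h1) ?_
    linear_combination (sq y * sq y * sq i * sq i) * C.sq_sq x hx +
      x * sq i * sq i * C.sq_sq y hy + x * y * C.sq_sq i hip + e1
  linear_combination sq x * sq y * sq z * e2 - sq z * sq i * sq y * sq y * C.sq_sq x hx -
      x * sq i * sq z * C.sq_sq y hy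

namespace Realizes

variable {N : ℕ} [NeZero N] {v : Fin N → SVec P.E P.O} {st : PState A N}

theorem lam_eq (h : Realizes P Pos sq v st) {a b : Fin N} (hab : a ≠ b)
    (he : isEdgeOf st.diag s(a, b)) :
    P.even (br P.β (v a) (v b)) = st.lam s(a, b) ∨
      P.even (br P.β (v a) (v b)) = -st.lam s(a, b) := by
  rcases hab.lt_or_gt with h1 | h1
  · exact .inl (h.lam _ _ h1 he).1
  · rw [Sym2.eq_swap] at he ⊢
    rw [br_swap P.alt, map_neg, (h.lam _ _ h1 he).1]
    exact .inr rfl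

variable [Algebra ℚ A] {R : Subalgebra ℚ A}

theorem odd3_mem (h : Realizes P Pos sq v st) (hP : P.PosData Pos sqrt sq) {c p q : Fin N}
    (T : IsTri st.diag {c, p, q}) (hcp : c ≠ p) (hcq : c ≠ q) (hpq : p ≠ q)
    (hR : sqrt (st.lam s(c, p)) * sqrt (st.lam s(c, q)) * sqrt (st.lam s(p, q)) *
      st.mu {c, p, q} ∈ R) {u w x : Fin N} (hu : u ∈ ({c, p, q} : Finset (Fin N)))
    (hw : w ∈ ({c, p, q} : Finset (Fin N))) (hx : x ∈ ({c, p, q} : Finset (Fin N))) :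
    P.odd (odd3 P.β (v u) (v w) (v x)) ∈ R := by
  obtain ⟨i, j, k, hij, hjk, hT⟩ :
      ∃ i j k, i < j ∧ j < k ∧ ({c, p, q} : Finset (Fin N)) = {i, j, k} := by
    have r1 := triple_rot c p q
    have r2 := triple_rot p q c
    have r3 := Finset.insert_comm c p {q}
    have r4 := triple_rot p c q
    have r5 := triple_rot c q p
    rcases hcp.lt_or_gt with h1 | h1 <;> rcases hcq.lt_or_gt with h2 | h2 <;>
      rcases hpq.lt_or_gt with h3 | h3
    · exact ⟨c, p, q, h1, h3, rfl⟩
    · exact ⟨c, q, p, h2, h3, r3.trans r4⟩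
    · exact absurd (h1.trans h3) h2.not_gt
    · exact ⟨q, c, p, h2, h1, r1.trans r2⟩
    · exact ⟨p, c, q, h1, h2, r3⟩
    · exact absurd (h2.trans h3) h1.not_gt
    · exact ⟨p, q, c, h3, h2, r1⟩
    · exact ⟨q, p, c, h3, h1, (r3.trans r4).trans r5⟩
  have hik := hij.trans hjk
  obtain ⟨ε, -, hmu⟩ := h.mu
  obtain ⟨m, hm, hmu⟩ := hmu i j k _ hij hjk hT T
  have T' := T
  rw [hT] at T'
  obtain ⟨ij, pij⟩ := h.lam i j hij (T'.edge (by simp) (by simp) hij.ne)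
  obtain ⟨jk, pjk⟩ := h.lam j k hjk (T'.edge (by simp) (by simp) hjk.ne)
  obtain ⟨ik, pik⟩ := h.lam i k hik (T'.edge (by simp) (by simp) hik.ne)
  have e := congrArg P.odd hmu
  rw [P.odd_smul, map_mul, map_mul, hP.even_sq _ (ij ▸ pij), hP.even_sq _ (jk ▸ pjk),
    hP.even_sq _ (ik ▸ pik), hm, ij, jk, ik] at e
  have comm {x y : A} (hx : x ∈ Pos) (hy : y ∈ Pos) : sqrt x * sqrt y = sqrt y * sqrt x := by
    obtain ⟨x, rfl⟩ := hP.lift x hx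
    obtain ⟨y, rfl⟩ := hP.lift y hy
    rw [← hP.even_sq x hx, ← hP.even_sq y hy, ← map_mul, mul_comm, map_mul]
  have key : sqrt (st.lam s(i, j)) * sqrt (st.lam s(j, k)) * sqrt (st.lam s(i, k)) =
      sqrt (st.lam s(c, p)) * sqrt (st.lam s(c, q)) * sqrt (st.lam s(p, q)) := by
    have c1 := comm pij pjk
    have c2 := comm pij pik
    have c3 := comm pjk pik
    rcases triple_perm hT hcp hcq hpq with ⟨rfl, rfl, rfl⟩ | ⟨rfl, rfl, rfl⟩ | ⟨rfl, rfl, rfl⟩ |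
      ⟨rfl, rfl, rfl⟩ | ⟨rfl, rfl, rfl⟩ | ⟨rfl, rfl, rfl⟩ <;> grind [Sym2.eq_swap, mul_assoc]
  rw [key] at e
  rw [hT] at hu hw hx
  refine EvenOdd.odd3_mem_of_mem R v ?_ hu hw hx
  rcases sgn_eq (ε {c, p, q}) with h1 | h1 <;> rw [h1] at e
  · rw [one_smul] at e
    rwa [← e]
  · rw [neg_smul, one_smul, map_neg] at e
    rw [← neg_neg (P.odd _), ← e]
    exact neg_mem hR

/-- The `λ`-length of a chord lies in every subalgebra containing the data along a chain of
triangles met by the chord. -/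
theorem br_mem {m : ℕ} (h : Realizes P Pos sq v st) (hP : P.PosData Pos sqrt sq)
    (tri : Fin (m + 1) → Finset (Fin N)) (ctr : Fin (m + 1) → Fin N)
    (oth : Fin (m + 1) → Fin N × Fin N) (dsp : Fin m → Fin N × Fin N)
    (htri : ∀ k, IsTri st.diag (tri k)) (htriv : ∀ k, tri k = {ctr k, (oth k).1, (oth k).2})
    (hvdist : ∀ k, ctr k ≠ (oth k).1 ∧ ctr k ≠ (oth k).2 ∧ (oth k).1 ≠ (oth k).2)
    (hne : ∀ k, (dsp k).1 ≠ (dsp k).2)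
    (hsep : ∀ k : Fin m, (dsp k).1 ∈ tri k.castSucc ∧ (dsp k).2 ∈ tri k.castSucc ∧
      (dsp k).1 ∈ tri k.succ ∧ (dsp k).2 ∈ tri k.succ)
    (hlam : ∀ e, isEdgeOf st.diag e → st.lam e ∈ R)
    (hinv : ∀ e, isEdgeOf st.diag e → Ring.inverse (st.lam e) ∈ R)
    (hmu : ∀ k, sqrt (st.lam s(ctr k, (oth k).1)) * sqrt (st.lam s(ctr k, (oth k).2)) *
      sqrt (st.lam s((oth k).1, (oth k).2)) * st.mu (tri k) ∈ R)
    {a b : Fin N} (ha : a ∈ tri 0) (hb : b ∈ tri (Fin.last m)) :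
    P.even (br P.β (v a) (v b)) ∈ R := by
  refine (EvenOdd.br_mem_of_chain v tri dsp (fun k => (htri k).1) hsep hne ?_ ?_ ?_ ha
    (Fin.last m) b hb b hb).1
  · intro k u hu w hw
    by_cases huw : u = w
    · rw [huw, br_self P.alt, map_zero]
      exact zero_mem R
    · have he := (htri k).edge hu hw huw
      rcases h.lam_eq huw he with h1 | h1 <;> rw [h1]
      · exact hlam _ he
      · exact neg_mem (hlam _ he)
  · intro k u hu w hw huw
    have he := (htri k).edge hu hw huw
    have hu' : IsUnit (st.lam s(u, w)) := by
      rcases huw.lt_or_gt with h1 | h1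
      · obtain ⟨e1, e2⟩ := h.lam _ _ h1 he
        rw [← e1] at e2 ⊢
        exact (hP.cone.unit _ e2).map P.even
      · rw [Sym2.eq_swap] at he ⊢
        obtain ⟨e1, e2⟩ := h.lam _ _ h1 he
        rw [← e1] at e2 ⊢
        exact (hP.cone.unit _ e2).map P.even
    rcases h.lam_eq huw he with h1 | h1 <;> rw [h1]
    · exact ⟨_, hinv _ he, Ring.inverse_mul_cancel _ hu'⟩
    · exact ⟨_, neg_mem (hinv _ he), by rw [neg_mul_neg, Ring.inverse_mul_cancel _ hu']⟩
  · intro k u hu w hw x hx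
    have h1 := hmu k
    have T := htri k
    rw [htriv k] at hu hw hx h1 T
    exact h.odd3_mem hP T (hvdist k).1 (hvdist k).2.1 (hvdist k).2.2 h1 hu hw hx

end Realizes

end

/-- Corollary 5.12 of the paper: the super Laurent phenomenon.
Let `T` be a triangulation of the `(n+3)`-gon with the default orientation, and
let `a, b` be any pair of vertices of the polygon; `m` is the number of internal
diagonals crossed by the arc `(a,b)`, and `tri, ctr, oth, dsp` record the faces
met by the arc, their fan centers, and the crossed diagonals in order.  Let
`θ̃_k = wt(σ_k) = √(x_j/(x_k x_l))·μ(tri k)` be the weight of the `σ`-edge of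
the `k`-th face met by the arc.  Then the `λ`-length of `(a,b)` — obtained from
the initial data by any sequence of super Ptolemy flips producing a
triangulation containing `(a,b)` —
(a) lies in the `ℚ`-subalgebra generated by the initial `λ`-lengths `x_i`,
their inverses, and the `θ̃_k` (each term is a Laurent monomial in the `x_i`
times a monomial in the `θ̃_k`); and
(b) lies in the `ℚ`-subalgebra generated by the square roots `√x_i`, their
inverses, and the `μ`-invariants of the initial triangulation (each term is a
Laurent monomial in the `√x_i` times a monomial in the `θ_i`). -/
theorem super_laurent_phenomenon
    (n m : ℕ)
    (A : Type*) [Ring A] [Algebra ℚ A]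
    (Pos : Set A) (sqrt : A → A)
    (hPosAdd : ∀ p ∈ Pos, ∀ q ∈ Pos, p + q ∈ Pos)
    (hPosMul : ∀ p ∈ Pos, ∀ q ∈ Pos, p * q ∈ Pos)
    (hPosInv : ∀ p ∈ Pos, Ring.inverse p ∈ Pos)
    (hPosCentral : ∀ p ∈ Pos, ∀ x : A, p * x = x * p)
    (hPosUnit : ∀ p ∈ Pos, IsUnit p)
    (hsqrtSq : ∀ p ∈ Pos, sqrt p * sqrt p = p)
    (hsqrtMem : ∀ p ∈ Pos, sqrt p ∈ Pos)
    (hsqrtMul : ∀ p ∈ Pos, ∀ q ∈ Pos, sqrt (p * q) = sqrt p * sqrt q)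
    -- the polygon, an arbitrary pair of vertices, and the initial triangulation
    (a b : Fin (n + 3)) (hab : a ≠ b)
    (D0 : Finset (Edg (n + 3))) (hD0 : IsTriangulation D0)
    -- the combinatorial structure of `D0` along the arc `(a, b)`:
    -- the `m+1` faces met by the arc, in order from `a` to `b`
    (tri : Fin (m + 1) → Finset (Fin (n + 3)))
    (ctr : Fin (m + 1) → Fin (n + 3))
    (oth : Fin (m + 1) → Fin (n + 3) × Fin (n + 3))
    (dsp : Fin m → Fin (n + 3) × Fin (n + 3))
    (htri : ∀ k, IsTri D0 (tri k))
    (htriv : ∀ k, tri k = {ctr k, (oth k).1, (oth k).2})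
    (hvdist : ∀ k, ctr k ≠ (oth k).1 ∧ ctr k ≠ (oth k).2 ∧ (oth k).1 ≠ (oth k).2)
    (ha : a ∈ tri 0) (hb : b ∈ tri (Fin.last m))
    (hdsp : ∀ k : Fin m, (dsp k).1 < (dsp k).2 ∧ s((dsp k).1, (dsp k).2) ∈ D0 ∧
      crossE s((dsp k).1, (dsp k).2) s(a, b))
    (hsep : ∀ k : Fin m, (dsp k).1 ∈ tri k.castSucc ∧ (dsp k).2 ∈ tri k.castSucc ∧
      (dsp k).1 ∈ tri k.succ ∧ (dsp k).2 ∈ tri k.succ)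
    -- `dsp` enumerates all the internal diagonals crossed by `(a, b)`
    (hall : ∀ e ∈ D0, crossE e s(a, b) → ∃ k : Fin m, e = s((dsp k).1, (dsp k).2))
    (horder : ∀ k : Fin m, ∀ j : Fin (m + 1), j.val ≤ k.val → ∀ w ∈ tri j,
      w ≠ (dsp k).1 → w ≠ (dsp k).2 → w ≠ b →
      crossE s((dsp k).1, (dsp k).2) s(w, b))
    (hapex : ∀ k : Fin (m + 1), ∀ h0 : 0 < k.val, ∀ h1 : k.val < m,
      ctr k ∈ s((dsp ⟨k.val - 1, by omega⟩).1, (dsp ⟨k.val - 1, by omega⟩).2) ∧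
      ctr k ∈ s((dsp ⟨k.val, h1⟩).1, (dsp ⟨k.val, h1⟩).2))
    (hctr0 : ∀ hm : 0 < m, ctr 0 ∈ s((dsp ⟨0, hm⟩).1, (dsp ⟨0, hm⟩).2))
    (hctrN : ∀ hm : 0 < m,
      ctr (Fin.last m) ∈ s((dsp ⟨m - 1, by omega⟩).1, (dsp ⟨m - 1, by omega⟩).2))
    (hctr01 : ∀ _ : 2 ≤ m, ctr 0 = ctr ⟨1, by omega⟩)
    (hctrN1 : ∀ _ : 2 ≤ m, ctr (Fin.last m) = ctr ⟨m - 1, by omega⟩)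
    -- the default orientation on the crossed diagonals
    (o0 : Edg (n + 3) → Bool)
    (hdef : ∀ k : Fin m,
      o0 s((dsp k).1, (dsp k).2) = decide ((dsp k).1 = ctr k.castSucc))
    -- the initial λ-lengths and μ-invariants
    (lam0 : Edg (n + 3) → A) (mu0 : Finset (Fin (n + 3)) → A)
    (hlam0 : ∀ e : Edg (n + 3), isEdgeOf D0 e → lam0 e ∈ Pos)
    (hmu0sq : ∀ t : Finset (Fin (n + 3)), IsTri D0 t → mu0 t * mu0 t = 0)
    (hmu0anti : ∀ t t' : Finset (Fin (n + 3)), IsTri D0 t → IsTri D0 t' →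
      mu0 t * mu0 t' = -(mu0 t' * mu0 t))
    -- a state obtained from the initial data by any sequence of super Ptolemy
    -- flips, whose triangulation contains the arc `(a, b)`
    (st : PState A (n + 3))
    (hreach : Relation.ReflTransGen (Flip Pos sqrt)
      ⟨D0, o0, lam0, mu0⟩ st)
    (hmem : isEdgeOf st.diag s(a, b)) :
    st.lam s(a, b) ∈ Algebra.adjoin ℚ
        ((lam0 '' {e | isEdgeOf D0 e})
          ∪ (Ring.inverse '' (lam0 '' {e | isEdgeOf D0 e}))
          ∪ Set.range (fun k : Fin (m + 1) =>
              sqrt (lam0 s((oth k).1, (oth k).2) *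
                Ring.inverse (lam0 s(ctr k, (oth k).1) * lam0 s(ctr k, (oth k).2)))
                * mu0 (tri k)))
    ∧ st.lam s(a, b) ∈ Algebra.adjoin ℚ
        (((fun e => sqrt (lam0 e)) '' {e | isEdgeOf D0 e})
          ∪ (Ring.inverse '' ((fun e => sqrt (lam0 e)) '' {e | isEdgeOf D0 e}))
          ∪ {x | ∃ t : Finset (Fin (n + 3)), IsTri D0 t ∧ x = mu0 t}) := by
  obtain ⟨P, hcent, hodd⟩ := exists_evenOdd (mu0 '' {T | IsTri D0 T}) (by
    rintro _ ⟨t, ht, rfl⟩ _ ⟨t', ht', rfl⟩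
    exact hmu0anti t t' ht ht')
  obtain ⟨sq, hP⟩ := P.exists_posData hPosAdd hPosMul hPosInv hPosUnit hsqrtSq hsqrtMem
    fun z hz => hcent z (hPosCentral z hz)
  obtain ⟨v, hv⟩ := hD0.exists_realizes hP o0 hlam0 fun T hT => hodd _ ⟨T, hT, rfl⟩
  have hst := hv.of_reachable hP hreach
  have hedge (k) : isEdgeOf D0 s(ctr k, (oth k).1) ∧ isEdgeOf D0 s(ctr k, (oth k).2) ∧
      isEdgeOf D0 s((oth k).1, (oth k).2) := by
    have T := htri k
    rw [htriv k] at T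
    obtain ⟨h1, h2, h3⟩ := hvdist k
    exact ⟨T.edge (by simp) (by simp) h1, T.edge (by simp) (by simp) h2,
      T.edge (by simp) (by simp) h3⟩
  have main (R : Subalgebra ℚ A) (h1 : ∀ e, isEdgeOf D0 e → lam0 e ∈ R)
      (h2 : ∀ e, isEdgeOf D0 e → Ring.inverse (lam0 e) ∈ R)
      (h3 : ∀ k, sqrt (lam0 s(ctr k, (oth k).1)) * sqrt (lam0 s(ctr k, (oth k).2)) *
        sqrt (lam0 s((oth k).1, (oth k).2)) * mu0 (tri k) ∈ R) : st.lam s(a, b) ∈ R := by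
    have := hv.br_mem hP tri ctr oth dsp htri htriv hvdist (fun k => (hdsp k).1.ne) hsep h1 h2 h3
      ha hb
    rcases hst.lam_eq hab hmem with h | h
    · rwa [← h]
    · rw [← neg_neg (st.lam _), ← h]
      exact neg_mem this
  constructor
  · refine main _ (fun e he => Algebra.subset_adjoin (.inl (.inl ⟨e, he, rfl⟩)))
      (fun e he => Algebra.subset_adjoin (.inl (.inr ⟨_, ⟨e, he, rfl⟩, rfl⟩))) fun k => ?_
    obtain ⟨e1, e2, e3⟩ := hedge k
    rw [← hP.mul_mul_sqrt hPosMul hPosInv (hlam0 _ e1) (hlam0 _ e2) (hlam0 _ e3), mul_assoc]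
    exact mul_mem (mul_mem (Algebra.subset_adjoin (.inl (.inl ⟨_, e1, rfl⟩)))
      (Algebra.subset_adjoin (.inl (.inl ⟨_, e2, rfl⟩)))) (Algebra.subset_adjoin (.inr ⟨k, rfl⟩))
  · refine main _ (fun e he => ?_) (fun e he => ?_) fun k => ?_
    · rw [← hsqrtSq _ (hlam0 e he)]
      exact mul_mem (Algebra.subset_adjoin (.inl (.inl ⟨e, he, rfl⟩)))
        (Algebra.subset_adjoin (.inl (.inl ⟨e, he, rfl⟩)))
    · rw [← hsqrtSq _ (hlam0 e he), Ring.mul_inverse_rev' (Commute.refl _)]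
      exact mul_mem (Algebra.subset_adjoin (.inl (.inr ⟨_, ⟨e, he, rfl⟩, rfl⟩)))
        (Algebra.subset_adjoin (.inl (.inr ⟨_, ⟨e, he, rfl⟩, rfl⟩)))
    · obtain ⟨e1, e2, e3⟩ := hedge k
      exact mul_mem (mul_mem (mul_mem (Algebra.subset_adjoin (.inl (.inl ⟨_, e1, rfl⟩)))
        (Algebra.subset_adjoin (.inl (.inl ⟨_, e2, rfl⟩))))
        (Algebra.subset_adjoin (.inl (.inl ⟨_, e3, rfl⟩))))
        (Algebra.subset_adjoin (.inr ⟨_, htri k, rfl⟩))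

end SuperTeich
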